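/- arXiv:2401.01135 — 3 statements merged into one kernel-verified Lean document; each statement's English description precedes it below -/
import Mathlib

section
/- Let f : F_q → F_p belong to the class RF with sign ε and dual f*. Let s ∈ F_p^*, a ∈ F_p, b ∈ F_q, and let N_s be the number of x ∈ F_q with a f(x) + Tr_{q/p}(bx) = s. If e is even, put σ = ε (η_0(−1))^{e/2} ∈ {1, −1}; then N_s = 0 if a = 0 and b = 0; N_s = p^{e−1} if a = 0 and b ≠ 0; N_s = p^{e−1} + σ(p−1)p^{e/2−1} if a ≠ 0 and f*(−b/a) = a^{−1}s; and N_s = p^{e−1} − σ p^{e/2−1} if a ≠ 0 and f*(−b/a) ≠ a^{−1}s. If e is odd, put τ = ε (η_0(−1))^{(e+1)/2} ∈ {1, −1}; then N_s = 0 if a = 0 and b = 0; N_s = p^{e−1} if a = 0 and b ≠ 0, or if a ≠ 0 and f*(−b/a) = a^{−1}s; N_s = p^{e−1} + τ p^{(e−1)/2} if a ≠ 0, f*(−b/a) ≠ a^{−1}s and η_0(f*(−b/a) − a^{−1}s) = 1; and N_s = p^{e−1} − τ p^{(e−1)/2} if a ≠ 0, f*(−b/a) ≠ a^{−1}s and η_0(f*(−b/a)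 − a^{−1}s) = −1. -/
open scoped Classical

noncomputable section

/-- The complex primitive `p`-th root of unity `ζ_p = exp(2πi/p)`. -/
def zetapc (p : ℕ) : ℂ := Complex.exp (2 * Real.pi * Complex.I / p)

/-- `√p* = i^{((p-1)/2)²} √p`, a square root of `p* = (-1)^{(p-1)/2} p`. -/
def sqrtpstar (p : ℕ) : ℂ := Complex.I ^ (((p - 1) / 2) ^ 2) * (Real.sqrt p : ℂ)

/-- The quadratic character of a finite field: `1` on nonzero squares, `-1` on
nonsquares, `0` at `0`. -/
def qchar (F : Type*) [MonoidWithZero F] : F → ℤ :=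
  fun y => if y = 0 then 0 else if IsSquare y then 1 else -1

/-- `f : F_q → F_p` belongs to the class `RF` of weakly regular bent functions,
with sign `ε` and dual `fstar`. -/
structure IsRF (p e : ℕ) (Fq : Type*) [Field Fq] [Fintype Fq] [Algebra (ZMod p) Fq]
    (f : Fq → ZMod p) (ε : ℤ) (fstar : Fq → ZMod p) : Prop where
  sign : ε = 1 ∨ ε = -1
  map_zero : f 0 = 0
  hom : ∃ h : ℕ, Even h ∧ 0 < h ∧ Nat.gcd (h - 1) (p - 1) = 1 ∧
    ∀ a : ZMod p, a ≠ 0 → ∀ x : Fq,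
      f (algebraMap (ZMod p) Fq a * x) = a ^ h * f x
  walsh : ∀ β : Fq,
    (∑ x : Fq, zetapc p ^ (f x - Algebra.trace (ZMod p) Fq (β * x)).val)
      = (ε : ℂ) * sqrtpstar p ^ e * zetapc p ^ (fstar β).val

open Polynomial in
lemma theta_pow {R : Type*} [CommRing R] (n k : ℕ) (hk : k ≤ n) :
    ∃ G : R[X], (fun A : R[X] => X * derivative A)^[k] ((X - 1) ^ n) = (X - 1) ^ (n - k) * G ∧
      G.eval 1 = (n.descFactorial k : R) := by
  induction k with
  | zero => exact ⟨1, by simp, by simp⟩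
  | succ k ih =>
    obtain ⟨G, hG, hG1⟩ := ih (by omega)
    obtain ⟨d, hd⟩ : ∃ d, n - k = d + 1 := ⟨n - k - 1, by omega⟩
    refine ⟨X * (C ((d : R) + 1) * G + (X - 1) * derivative G), ?_, ?_⟩
    · rw [Function.iterate_succ_apply', hG, hd, show n - (k + 1) = d by omega]
      simp only [derivative_mul, derivative_pow, derivative_sub, derivative_X, derivative_one]
      simp only [Nat.add_sub_cancel, Nat.cast_add, Nat.cast_one, map_add, map_natCast, map_one]
      ring
    · rw [Nat.descFactorial_succ, hd]
      simp [hG1]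

open Polynomial in
lemma theta_sum {R : Type*} [CommRing R] (p k : ℕ) :
    (fun A : R[X] => X * derivative A)^[k] (∑ j ∈ Finset.range p, X ^ j)
      = ∑ j ∈ Finset.range p, C ((j : R) ^ k) * X ^ j := by
  induction k with
  | zero => simp
  | succ k ih =>
    rw [Function.iterate_succ_apply', ih]
    simp only [derivative_sum, Finset.mul_sum]
    refine Finset.sum_congr rfl fun j _ => ?_
    rcases j with _ | j
    · simp only [Nat.cast_zero, pow_zero, mul_one, derivative_C, mul_zero, pow_succ, map_zero]
    · rw [derivative_C_mul_X_pow]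
      simp only [Nat.add_sub_cancel, pow_succ, map_mul]
      ring

lemma descFact_neg (p : ℕ) [Fact p.Prime] (k : ℕ) (hk : k < p) :
    ((p - 1).descFactorial k : ZMod p) = (-1) ^ k * (k.factorial : ZMod p) := by
  induction k with
  | zero => simp
  | succ k ih =>
    have h : ((p - 1 - k : ℕ) : ZMod p) = - ((k : ZMod p) + 1) := by
      have : ((p - 1 - k : ℕ) : ZMod p) + (k + 1) = ((p : ℕ) : ZMod p) := by
        exact_mod_cast congrArg (Nat.cast : ℕ → ZMod p) (show p - 1 - k + (k + 1) = p by omega)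
      rw [CharP.cast_eq_zero (ZMod p) p] at this
      linear_combination this
    rw [Nat.descFactorial_succ, Nat.factorial_succ]
    push_cast
    rw [ih (by omega), h]
    ring

open Polynomial in
lemma gauss_modp (p m : ℕ) [Fact p.Prime] (hm : p = 2 * m + 1) (δ : ZMod p)
    (h : cyclotomic p (ZMod p) ∣ ∑ j ∈ Finset.range p, C ((j : ZMod p) ^ m) * X ^ j
      - C δ * ∏ k ∈ Finset.range m, (X ^ (m * (k + 1)) - X ^ ((m + 1) * (k + 1)))) : δ = 1 := by
  have hp := (Fact.out : p.Prime)
  have hm0 : 0 < m := by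
    rcases m with _ | m
    · subst hm; exact absurd hp (by norm_num)
    · omega
  have hc : cyclotomic p (ZMod p) = (X - 1) ^ (p - 1) := by
    have := cyclotomic_mul_prime_eq_pow_of_not_dvd (ZMod p) (p := p) (n := 1)
      (by simpa using hp.one_lt.ne')
    simpa using this
  obtain ⟨G, hG, hG1⟩ := theta_pow (R := ZMod p) (p - 1) m (by omega)
  rw [← hc, cyclotomic_prime, theta_sum, show p - 1 - m = m by omega] at hG
  have hH : ∏ k ∈ Finset.range m, (X ^ (m * (k + 1)) - X ^ ((m + 1) * (k + 1)) : (ZMod p)[X])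
      = (X - 1) ^ m * ∏ k ∈ Finset.range m,
        (X ^ (m * (k + 1)) * (- ∑ i ∈ Finset.range (k + 1), X ^ i)) := by
    rw [← Finset.card_range m, ← Finset.prod_const, Finset.card_range, ← Finset.prod_mul_distrib]
    refine Finset.prod_congr rfl fun k _ => ?_
    have := geom_sum_mul (X : (ZMod p)[X]) (k + 1)
    rw [add_mul, pow_add, one_mul]
    linear_combination (X ^ (m * (k + 1))) * this
  have hH1 : eval 1 (∏ k ∈ Finset.range m,
        (X ^ (m * (k + 1)) * (- ∑ i ∈ Finset.range (k + 1), X ^ i)) : (ZMod p)[X])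
        = (-1) ^ m * (m.factorial : ZMod p) := by
    rw [eval_prod]
    simp only [eval_mul, eval_pow, eval_X, eval_neg, eval_finsetSum, one_pow, Finset.sum_const,
      Finset.card_range, one_mul]
    rw [Finset.prod_neg, ← Finset.prod_range_add_one_eq_factorial]
    push_cast
    simp
  set H : (ZMod p)[X] := ∏ k ∈ Finset.range m,
        (X ^ (m * (k + 1)) * (- ∑ i ∈ Finset.range (k + 1), X ^ i))
  rw [hG, hH, hc, show (X - 1 : (ZMod p)[X]) ^ m * G - C δ * ((X - 1) ^ m * H)
    = (X - 1) ^ m * (G - C δ * H) by ring, show p - 1 = m + m by omega, pow_add] at h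
  have hX : (X - 1 : (ZMod p)[X]) ≠ 0 := X_sub_C_ne_zero 1
  have h2 := (dvd_pow_self (X - 1 : (ZMod p)[X]) hm0.ne').trans
    ((mul_dvd_mul_iff_left (pow_ne_zero m hX)).1 h)
  have h3 : eval 1 (G - C δ * H) = 0 := by
    obtain ⟨K, hK⟩ := h2
    rw [hK]; simp
  rw [eval_sub, eval_mul, eval_C, hG1, hH1, descFact_neg p m (by omega)] at h3
  have h4 : (-1 : ZMod p) ^ m * (m.factorial : ZMod p) ≠ 0 := by
    refine mul_ne_zero (pow_ne_zero _ (by simp)) ?_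
    rw [Ne, ZMod.natCast_eq_zero_iff, hp.dvd_factorial]
    omega
  have h5 : ((-1 : ZMod p) ^ m * (m.factorial : ZMod p)) * (1 - δ) = 0 := by
    linear_combination h3
  have := (mul_eq_zero.1 h5).resolve_left h4
  linear_combination -this

lemma zetapc_prim (p : ℕ) [Fact p.Prime] : IsPrimitiveRoot (zetapc p) p :=
  Complex.isPrimitiveRoot_exp p (Fact.out : p.Prime).ne_zero

lemma zetapc_factor (p m : ℕ) [Fact p.Prime] (hm : p = 2 * m + 1) (k : ℕ) :
    zetapc p ^ (m * (k + 1)) - zetapc p ^ ((m + 1) * (k + 1))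
      = (-1) ^ k * Complex.I * ((2 * Real.sin (Real.pi * (k + 1) / p) : ℝ) : ℂ) := by
  have hp0 : (p : ℂ) ≠ 0 := by exact_mod_cast (Fact.out : p.Prime).ne_zero
  set u : ℂ := Complex.exp (Real.pi * Complex.I / p) with hu
  have hz : zetapc p = u ^ 2 := by
    rw [zetapc, hu, ← Complex.exp_nat_mul]; congr 1; push_cast; ring
  have hup : u ^ p = -1 := by
    rw [hu, ← Complex.exp_nat_mul, mul_div_cancel₀ _ hp0, Complex.exp_pi_mul_I]
  have hu0 : u ≠ 0 := Complex.exp_ne_zero _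
  have h1 : zetapc p ^ m = - u⁻¹ := by
    rw [hz, ← pow_mul]
    field_simp
    rw [← pow_succ, ← hm, hup]
  have h2 : zetapc p ^ (m + 1) = - u := by
    rw [pow_succ, h1, hz]; field_simp
  rw [pow_mul, pow_mul, h1, h2, neg_pow, neg_pow u, inv_pow]
  have h3 : u ^ (k + 1) = Complex.exp ((Real.pi * (k + 1) / p : ℝ) * Complex.I) := by
    rw [hu, ← Complex.exp_nat_mul]; congr 1; push_cast; ring
  rw [h3, ← Complex.exp_neg, ← neg_mul, Complex.exp_mul_I, Complex.exp_mul_I, Complex.cos_neg,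
    Complex.sin_neg]
  push_cast
  ring

lemma zeta_prod_eq (p m : ℕ) [Fact p.Prime] (hm : p = 2 * m + 1) :
    ∏ k ∈ Finset.range m, (zetapc p ^ (m * (k + 1)) - zetapc p ^ ((m + 1) * (k + 1)))
      = sqrtpstar p := by
  have hpp := (Fact.out : p.Prime)
  have hpos : ∀ k ∈ Finset.range m, 0 < 2 * Real.sin (Real.pi * (k + 1) / p) := by
    intro k hk
    have hk := Finset.mem_range.1 hk
    have hp0 : (0 : ℝ) < p := by exact_mod_cast hpp.pos
    have : (k : ℝ) + 1 < p := by exact_mod_cast (show k + 1 < p by omega)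
    have := Real.sin_pos_of_pos_of_lt_pi (x := Real.pi * (k + 1) / p) (by positivity)
      (by rw [div_lt_iff₀ hp0]; exact mul_lt_mul_of_pos_left this Real.pi_pos)
    linarith
  set R : ℝ := ∏ k ∈ Finset.range m, (2 * Real.sin (Real.pi * (k + 1) / p)) with hR
  have hR0 : 0 < R := Finset.prod_pos hpos
  have hz1 : ‖zetapc p‖ = 1 := (zetapc_prim p).norm'_eq_one hpp.ne_zero
  have hnorm : ∀ k ∈ Finset.range m, ‖1 - zetapc p ^ (k + 1)‖ = 2 * Real.sin (Real.pi * (k + 1) / p) := by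
    intro k hk
    have h := congrArg norm (zetapc_factor p m hm k)
    rw [add_mul, pow_add, one_mul,
      show zetapc p ^ (m * (k + 1)) - zetapc p ^ (m * (k + 1)) * zetapc p ^ (k + 1)
      = zetapc p ^ (m * (k + 1)) * (1 - zetapc p ^ (k + 1)) by ring, norm_mul, norm_pow, hz1,
      one_pow, one_mul, norm_mul, norm_mul, norm_pow, norm_neg, norm_one, one_pow, Complex.norm_I,
      one_mul, one_mul, Complex.norm_real, Real.norm_of_nonneg (hpos k hk).le] at h
    exact h
  have hRR : R * R = p := by
    have hprim : IsPrimitiveRoot (zetapc p) (2 * m + 1) := by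
      convert zetapc_prim p using 1
      exact hm.symm
    have h := congrArg norm (IsPrimitiveRoot.prod_one_sub_pow_eq_order (n := 2 * m) hprim)
    rw [norm_prod, two_mul, Finset.prod_range_add, Finset.prod_congr rfl hnorm,
      ← Finset.prod_range_reflect (fun k => ‖1 - zetapc p ^ (m + k + 1)‖)] at h
    have h2 : ∀ k ∈ Finset.range m, ‖1 - zetapc p ^ (m + (m - 1 - k) + 1)‖
        = 2 * Real.sin (Real.pi * (k + 1) / p) := by
      intro k hk
      rw [← hnorm k hk]
      have hk := Finset.mem_range.1 hk
      have : zetapc p ^ (m + (m - 1 - k) + 1) * zetapc p ^ (k + 1) = 1 := by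
        rw [← pow_add, show m + (m - 1 - k) + 1 + (k + 1) = p by omega]
        exact (zetapc_prim p).pow_eq_one
      have h3 : ‖(1 - zetapc p ^ (m + (m - 1 - k) + 1)) * zetapc p ^ (k + 1)‖ =
          ‖1 - zetapc p ^ (k + 1)‖ := by
        rw [sub_mul, this, one_mul, norm_sub_rev]
      rwa [norm_mul, norm_pow, hz1, one_pow, mul_one] at h3
    rw [Finset.prod_congr rfl h2] at h
    rw [hR, h, hm]
    simp only [← two_mul]
    norm_cast
  have hI : ∀ n : ℕ, ∏ k ∈ Finset.range n, ((-1) ^ k * Complex.I) = Complex.I ^ (n ^ 2) := by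
    intro n
    induction n with
    | zero => simp
    | succ n ih =>
      rw [Finset.prod_range_succ, ih, show (n + 1) ^ 2 = n ^ 2 + 2 * n + 1 by ring, pow_add,
        pow_add, pow_mul _ 2, Complex.I_sq]
      ring
  rw [Finset.prod_congr rfl (fun k _ => zetapc_factor p m hm k), Finset.prod_mul_distrib, hI,
    ← Complex.ofReal_prod, ← hR, sqrtpstar, show (p - 1) / 2 = m by omega, ← hRR,
    Real.sqrt_mul_self hR0.le]

lemma psi_eq (p : ℕ) [Fact p.Prime] (x : ZMod p) :
    zetapc p ^ x.val = ZMod.stdAddChar x := by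
  rw [ZMod.stdAddChar_apply, ZMod.toCircle_apply, zetapc, ← Complex.exp_nat_mul]
  congr 1
  ring

lemma psi_mul (p : ℕ) [Fact p.Prime] (y x : ZMod p) :
    (zetapc p ^ y.val) ^ x.val = ZMod.stdAddChar (y * x) := by
  rw [← psi_eq, ← pow_mul, ← pow_mod_orderOf, ← (zetapc_prim p).eq_orderOf, ZMod.val_mul]

open Polynomial in
lemma cyc_dvd (p : ℕ) [Fact p.Prime] (A : ℤ[X]) (h : aeval (zetapc p) A = 0) :
    cyclotomic p ℤ ∣ A := by
  have hp := (Fact.out : p.Prime)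
  rw [cyclotomic_eq_minpoly (zetapc_prim p) hp.pos]
  exact minpoly.isIntegrallyClosed_dvd ((zetapc_prim p).isIntegral hp.pos) h

open Polynomial in
lemma aeval_conj (p : ℕ) [Fact p.Prime] (A : ℤ[X]) (h : aeval (zetapc p) A = 0)
    (y : ZMod p) (hy : y ≠ 0) : aeval (zetapc p ^ y.val) A = 0 := by
  have hp := (Fact.out : p.Prime)
  obtain ⟨B, rfl⟩ := cyc_dvd p A h
  have hc : y.val.Coprime p := by
    refine Nat.Coprime.symm ((hp.coprime_iff_not_dvd).2 fun hd => hy ?_)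
    rwa [← ZMod.natCast_eq_zero_iff, ZMod.natCast_zmod_val] at hd
  have := ((zetapc_prim p).pow_of_coprime _ hc).isRoot_cyclotomic hp.pos
  rw [map_mul, ← eval_map_algebraMap, map_cyclotomic, this.eq_zero, zero_mul]

open Polynomial in
/-- The Gauss polynomial. -/
def gaussPoly (p : ℕ) [Fact p.Prime] : ℤ[X] :=
  ∑ y : ZMod p, C (quadraticChar (ZMod p) y) * X ^ y.val

open Polynomial in
lemma gaussPoly_aeval (p : ℕ) [Fact p.Prime] (y : ZMod p) :
    aeval (zetapc p ^ y.val) (gaussPoly p)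
      = ∑ x : ZMod p, ((quadraticChar (ZMod p) x : ℤ) : ℂ) * ZMod.stdAddChar (y * x) := by
  simp [gaussPoly, psi_mul]

open Polynomial in
lemma gaussPoly_aeval_one (p : ℕ) [Fact p.Prime] :
    aeval (zetapc p) (gaussPoly p)
      = ∑ x : ZMod p, ((quadraticChar (ZMod p) x : ℤ) : ℂ) * ZMod.stdAddChar x := by
  simp [gaussPoly, psi_eq]

lemma ringChar_ne (p : ℕ) [Fact p.Prime] (hodd : Odd p) : ringChar (ZMod p) ≠ 2 := by
  rw [ZMod.ringChar_zmod_n]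
  rintro rfl
  exact absurd hodd (by decide)

lemma quad_neg_one (p m : ℕ) [Fact p.Prime] (hm : p = 2 * m + 1) :
    quadraticChar (ZMod p) (-1) = (-1) ^ m := by
  have h := quadraticChar_eq_pow_of_char_ne_two (ringChar_ne p ⟨m, hm⟩)
    (a := (-1 : ZMod p)) (by simp)
  rw [h, ZMod.card, show p / 2 = m by omega]
  rcases Nat.even_or_odd m with hm' | hm'
  · simp [hm'.neg_one_pow]
  · have : (-1 : ZMod p) ≠ 1 := by
      have := ringChar_ne p ⟨m, hm⟩
      exact Ring.neg_one_ne_one_of_char_ne_two this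
    simp [hm'.neg_one_pow, this]

lemma sqrtpstar_sq (p m : ℕ) [Fact p.Prime] (hm : p = 2 * m + 1) :
    sqrtpstar p ^ 2 = ((quadraticChar (ZMod p) (-1) : ℤ) : ℂ) * p := by
  rw [quad_neg_one p m hm, sqrtpstar, mul_pow, ← Complex.ofReal_pow,
    Real.sq_sqrt (Nat.cast_nonneg _), ← pow_mul, mul_comm _ 2, pow_mul, Complex.I_sq,
    show (p - 1) / 2 = m by omega]
  push_cast
  congr 1
  rcases Nat.even_or_odd m with hm' | hm'
  · rw [hm'.neg_one_pow, (hm'.pow_of_ne_zero two_ne_zero).neg_one_pow]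
  · rw [hm'.neg_one_pow, hm'.pow.neg_one_pow]

lemma gauss_sq' (p m : ℕ) [Fact p.Prime] (hm : p = 2 * m + 1) :
    (∑ x : ZMod p, ((quadraticChar (ZMod p) x : ℤ) : ℂ) * ZMod.stdAddChar x) ^ 2
      = ((quadraticChar (ZMod p) (-1) : ℤ) : ℂ) * p := by
  have hr := ringChar_ne p ⟨m, hm⟩
  have h := gaussSum_sq (χ := (quadraticChar (ZMod p)).ringHomComp (Int.castRingHom ℂ))
    (ψ := (ZMod.stdAddChar : AddChar (ZMod p) ℂ)) ?_ ?_ (ZMod.isPrimitive_stdAddChar p)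
  · simpa [gaussSum] using h
  · rw [Ne, MulChar.ringHomComp_eq_one_iff (Int.cast_injective)]
    exact quadraticChar_ne_one hr
  · exact (quadraticChar_isQuadratic _).comp _

open Polynomial in
lemma gauss_eq (p m : ℕ) [Fact p.Prime] (hm : p = 2 * m + 1) :
    ∑ x : ZMod p, ((quadraticChar (ZMod p) x : ℤ) : ℂ) * ZMod.stdAddChar x = sqrtpstar p := by
  have hr := ringChar_ne p ⟨m, hm⟩
  have key : ∀ δ : ℤ, ∑ x : ZMod p, ((quadraticChar (ZMod p) x : ℤ) : ℂ) * ZMod.stdAddChar x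
      = δ * sqrtpstar p → (δ : ZMod p) = 1 := by
    intro δ hδ
    refine gauss_modp p m hm δ ?_
    have h1 : aeval (zetapc p) (gaussPoly p
      - C δ * ∏ k ∈ Finset.range m, (X ^ (m * (k + 1)) - X ^ ((m + 1) * (k + 1)))) = 0 := by
      rw [map_sub, gaussPoly_aeval_one, hδ, ← zeta_prod_eq p m hm]
      simp [map_prod]
    have h2 := Polynomial.map_dvd (Int.castRingHom (ZMod p)) (cyc_dvd p _ h1)
    rw [map_cyclotomic_int] at h2
    convert h2 using 1
    rw [Polynomial.map_sub, Polynomial.map_mul, Polynomial.map_prod, gaussPoly,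
      Polynomial.map_sum]
    congr 1
    · symm
      refine Finset.sum_nbij' (fun y => y.val) (fun n => (n : ZMod p)) ?_ ?_ ?_ ?_ ?_
      · intro y _; exact Finset.mem_range.2 (ZMod.val_lt y)
      · simp
      · intro y _; simp
      · intro n hn; exact ZMod.val_cast_of_lt (Finset.mem_range.1 hn)
      · intro y _
        have := quadraticChar_eq_pow_of_char_ne_two' hr y
        rw [ZMod.card, show p / 2 = m by omega] at this
        simp [← this]
    · simp
  have hsq := (gauss_sq' p m hm).trans (sqrtpstar_sq p m hm).symm
  rcases sq_eq_sq_iff_eq_or_eq_neg.1 hsq with h | h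
  · exact h
  · have := key (-1) (by rw [h]; simp)
    push_cast at this
    exact absurd this (Ring.neg_one_ne_one_of_char_ne_two hr)

lemma gauss_shift (p m : ℕ) [Fact p.Prime] (hm : p = 2 * m + 1) (y : ZMod p) :
    ∑ x : ZMod p, ((quadraticChar (ZMod p) x : ℤ) : ℂ) * ZMod.stdAddChar (y * x)
      = ((quadraticChar (ZMod p) y : ℤ) : ℂ) * sqrtpstar p := by
  have hr := ringChar_ne p ⟨m, hm⟩
  by_cases hy : y = 0
  · subst hy
    have := quadraticChar_sum_zero hr
    simp only [zero_mul, AddChar.map_zero_eq_one, mul_one, MulChar.map_zero, Int.cast_zero]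
    exact_mod_cast this
  · rw [← gauss_eq p m hm, Finset.mul_sum]
    refine Fintype.sum_equiv (Equiv.mulLeft₀ y hy) _ _ fun x => ?_
    have h1 := quadraticChar_sq_one hy
    rw [show (Equiv.mulLeft₀ y hy) x = y * x from rfl, map_mul (quadraticChar (ZMod p)) y x]
    rw [← mul_assoc]
    congr 1
    rw [← Int.cast_mul, ← mul_assoc, ← sq, h1, one_mul]

lemma qchar_eq (p : ℕ) [Fact p.Prime] (y : ZMod p) :
    qchar (ZMod p) y = quadraticChar (ZMod p) y := by
  rw [quadraticChar_apply, quadraticCharFun, qchar]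
  split_ifs <;> rfl

open Polynomial in
lemma walsh_conj (p m e : ℕ) [Fact p.Prime] (hm : p = 2 * m + 1) {T : Type*} [Fintype T]
    (u : T → ZMod p) (ε : ℤ) (c : ZMod p)
    (h : ∑ x : T, zetapc p ^ (u x).val = (ε : ℂ) * sqrtpstar p ^ e * zetapc p ^ c.val)
    (y : ZMod p) (hy : y ≠ 0) :
    ∑ x : T, ZMod.stdAddChar (y * u x) = (ε : ℂ) *
      (((quadraticChar (ZMod p) y : ℤ) : ℂ) * sqrtpstar p) ^ e * ZMod.stdAddChar (y * c) := by
  have h1 : aeval (zetapc p) (∑ x : T, X ^ (u x).val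
      - C ε * gaussPoly p ^ e * X ^ c.val : ℤ[X]) = 0 := by
    simp only [map_sub, map_mul, map_sum, map_pow, aeval_X, gaussPoly_aeval_one, gauss_eq p m hm, h,
      aeval_C]
    simp
  have h2 := aeval_conj p _ h1 y hy
  simp only [map_sub, map_mul, map_sum, map_pow, aeval_X, gaussPoly_aeval, gauss_shift p m hm,
      aeval_C, psi_mul] at h2
  simpa using sub_eq_zero.1 h2

lemma count_eq (p : ℕ) [Fact p.Prime] {T : Type*} [Fintype T] (u : T → ZMod p) (t : ZMod p) :
    (p : ℂ) * (Nat.card {x : T // u x = t} : ℂ) = Fintype.card T +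
      ∑ y ∈ Finset.univ.erase (0 : ZMod p), ZMod.stdAddChar (y * (-t)) *
        ∑ x : T, (ZMod.stdAddChar (y * u x) : ℂ) := by
  have h0 : ∑ y : ZMod p, ZMod.stdAddChar (y * (-t)) * ∑ x : T, (ZMod.stdAddChar (y * u x) : ℂ)
      = (p : ℂ) * (Nat.card {x : T // u x = t} : ℂ) := by
    simp only [Finset.mul_sum, ← AddChar.map_add_eq_mul, ← mul_add]
    rw [Finset.sum_comm]
    simp only [AddChar.sum_mulShift _ (ZMod.isPrimitive_stdAddChar p), ZMod.card]
    rw [Nat.card_eq_fintype_card, Fintype.card_subtype, Finset.card_filter]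
    push_cast
    rw [Finset.mul_sum]
    refine Finset.sum_congr rfl fun x _ => ?_
    have : -t + u x = 0 ↔ u x = t := by
      rw [neg_add_eq_zero]; exact eq_comm
    simp [this]
  rw [← h0, ← Finset.add_sum_erase _ _ (Finset.mem_univ (0 : ZMod p))]
  simp

lemma sum_even (p : ℕ) [Fact p.Prime] (c : ZMod p) :
    ∑ y ∈ Finset.univ.erase (0 : ZMod p), (ZMod.stdAddChar (y * c) : ℂ)
      = if c = 0 then (p : ℂ) - 1 else -1 := by
  have h := AddChar.sum_mulShift c (ZMod.isPrimitive_stdAddChar p)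
  rw [← Finset.add_sum_erase _ _ (Finset.mem_univ (0 : ZMod p))] at h
  simp only [zero_mul, AddChar.map_zero_eq_one, ZMod.card] at h
  rw [eq_sub_of_add_eq' h]
  split_ifs <;> simp

lemma count_lin (p e : ℕ) [Fact p.Prime] (he : 0 < e)
    (Fq : Type) [Field Fq] [Fintype Fq] [Algebra (ZMod p) Fq]
    (hcq : Fintype.card Fq = p ^ e) (b : Fq) (hb : b ≠ 0) (s : ZMod p) :
    Nat.card {x : Fq // Algebra.trace (ZMod p) Fq (b * x) = s} = p ^ (e - 1) := by
  have h := count_eq p (fun x : Fq => Algebra.trace (ZMod p) Fq (b * x)) s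
  have hp := (Fact.out : p.Prime)
  rw [Finset.sum_eq_zero, add_zero, hcq] at h
  · have h' : p * Nat.card {x : Fq // Algebra.trace (ZMod p) Fq (b * x) = s} = p ^ e := by
      exact_mod_cast h
    obtain ⟨d, rfl⟩ : ∃ d, e = d + 1 := ⟨e - 1, by omega⟩
    rw [pow_succ', Nat.mul_right_inj hp.ne_zero] at h'
    simpa using h'
  · intro y hy
    have hy := (Finset.mem_erase.1 hy).1
    let ψ : AddChar Fq ℂ := (ZMod.stdAddChar (N := p)).compAddMonoidHom
      ((AddMonoidHom.mulLeft y).comp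
        ((Algebra.trace (ZMod p) Fq).toAddMonoidHom.comp (AddMonoidHom.mulLeft b)))
    have hψ : ψ ≠ 1 := by
      obtain ⟨z, hz⟩ := Algebra.trace_surjective (ZMod p) Fq 1
      refine AddChar.ne_one_iff.2 ⟨b⁻¹ * z, ?_⟩
      change ZMod.stdAddChar (y * Algebra.trace (ZMod p) Fq (b * (b⁻¹ * z))) ≠ 1
      rw [mul_inv_cancel_left₀ hb, hz, mul_one]
      intro h1
      exact hy (ZMod.injective_stdAddChar (h1.trans (AddChar.map_zero_eq_one _).symm))
    have := AddChar.sum_eq_zero_of_ne_one hψ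
    have h2 : ∑ x : Fq, (ZMod.stdAddChar (y * Algebra.trace (ZMod p) Fq (b * x)) : ℂ) = 0 := this
    rw [h2, mul_zero]

lemma count_bent (p m e : ℕ) [Fact p.Prime] (hm : p = 2 * m + 1) (he : 0 < e)
    {T : Type*} [Fintype T] (hT : Fintype.card T = p ^ e)
    (u : T → ZMod p) (ε : ℤ) (c : ZMod p)
    (h : ∑ x : T, zetapc p ^ (u x).val = (ε : ℂ) * sqrtpstar p ^ e * zetapc p ^ c.val)
    (t : ZMod p) :
    (Even e → (Nat.card {x : T // u x = t} : ℤ) = (p : ℤ) ^ (e - 1) +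
      ε * quadraticChar (ZMod p) (-1) ^ (e / 2) * (if c = t then (p : ℤ) - 1 else -1)
        * (p : ℤ) ^ (e / 2 - 1)) ∧
    (Odd e → (Nat.card {x : T // u x = t} : ℤ) = (p : ℤ) ^ (e - 1) +
      ε * quadraticChar (ZMod p) (-1) ^ ((e + 1) / 2) * quadraticChar (ZMod p) (c - t)
        * (p : ℤ) ^ ((e - 1) / 2)) := by
  have hp := (Fact.out : p.Prime)
  have hp0 : (p : ℤ) ≠ 0 := by exact_mod_cast hp.ne_zero
  have hcount := count_eq p u t
  have hsum : ∀ y ∈ Finset.univ.erase (0 : ZMod p), ZMod.stdAddChar (y * (-t)) *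
        ∑ x : T, (ZMod.stdAddChar (y * u x) : ℂ) = (ε * sqrtpstar p ^ e) *
        (((quadraticChar (ZMod p) y : ℤ) : ℂ) ^ e * ZMod.stdAddChar (y * (c - t))) := by
    intro y hy
    rw [walsh_conj p m e hm u ε c h y (Finset.mem_erase.1 hy).1, sub_eq_add_neg, mul_add,
      AddChar.map_add_eq_mul]
    ring
  rw [Finset.sum_congr rfl hsum, ← Finset.mul_sum, hT] at hcount
  have hq2 := sqrtpstar_sq p m hm
  constructor
  · rintro ⟨k, hk⟩
    obtain ⟨d, rfl⟩ : ∃ d, k = d + 1 := ⟨k - 1, by omega⟩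
    have h1 : ∑ y ∈ Finset.univ.erase (0 : ZMod p), (((quadraticChar (ZMod p) y : ℤ) : ℂ) ^ e
        * ZMod.stdAddChar (y * (c - t))) = if c = t then (p : ℂ) - 1 else -1 := by
      rw [← if_congr (sub_eq_zero (a := c) (b := t)) rfl rfl, ← sum_even]
      refine Finset.sum_congr rfl fun y hy => ?_
      have := quadraticChar_sq_one (Finset.mem_erase.1 hy).1
      rw [hk, ← two_mul, pow_mul, ← Int.cast_pow, this]
      simp
    have h2 : sqrtpstar p ^ e = (((quadraticChar (ZMod p) (-1) : ℤ) : ℂ) * p) ^ (d + 1) := by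
      rw [hk, ← two_mul, pow_mul, hq2]
    rw [h1, h2] at hcount
    have h3 : (p : ℤ) * (Nat.card {x : T // u x = t} : ℤ) = (p : ℤ) ^ e +
      ε * (quadraticChar (ZMod p) (-1) * (p : ℤ)) ^ (d + 1)
        * (if c = t then (p : ℤ) - 1 else -1) := by
      have : ((if c = t then (p : ℤ) - 1 else -1 : ℤ) : ℂ) = if c = t then (p : ℂ) - 1 else -1 := by
        split_ifs <;> simp
      rw [← this] at hcount
      exact_mod_cast hcount
    refine mul_left_cancel₀ hp0 (h3.trans ?_)
    rw [show e / 2 = d + 1 by omega, show d + 1 - 1 = d by omega,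
      show e = (e - 1) + 1 by omega, Nat.add_sub_cancel]
    ring
  · rintro ⟨k, hk⟩
    have h1 : ∑ y ∈ Finset.univ.erase (0 : ZMod p), (((quadraticChar (ZMod p) y : ℤ) : ℂ) ^ e
        * ZMod.stdAddChar (y * (c - t)))
        = ((quadraticChar (ZMod p) (c - t) : ℤ) : ℂ) * sqrtpstar p := by
      rw [← gauss_shift p m hm, ← Finset.add_sum_erase _ _ (Finset.mem_univ (0 : ZMod p))]
      simp only [MulChar.map_zero, Int.cast_zero, zero_mul, zero_add]
      refine Finset.sum_congr rfl fun y hy => ?_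
      have := quadraticChar_sq_one (Finset.mem_erase.1 hy).1
      rw [hk, pow_succ, pow_mul, ← Int.cast_pow, this, mul_comm y]
      simp
    have h2 : sqrtpstar p ^ e * sqrtpstar p
        = (((quadraticChar (ZMod p) (-1) : ℤ) : ℂ) * p) ^ (k + 1) := by
      rw [hk, ← pow_succ, show 2 * k + 1 + 1 = 2 * (k + 1) by ring, pow_mul, hq2]
    rw [h1, show (ε : ℂ) * sqrtpstar p ^ e * (((quadraticChar (ZMod p) (c - t) : ℤ) : ℂ)
      * sqrtpstar p) = ε * (sqrtpstar p ^ e * sqrtpstar p)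
      * ((quadraticChar (ZMod p) (c - t) : ℤ) : ℂ) by ring, h2] at hcount
    have h3 : (p : ℤ) * (Nat.card {x : T // u x = t} : ℤ) = (p : ℤ) ^ e +
      ε * (quadraticChar (ZMod p) (-1) * (p : ℤ)) ^ (k + 1)
        * quadraticChar (ZMod p) (c - t) := by
      exact_mod_cast hcount
    refine mul_left_cancel₀ hp0 (h3.trans ?_)
    rw [show (e + 1) / 2 = k + 1 by omega, show (e - 1) / 2 = k by omega,
      show e = (e - 1) + 1 by omega, Nat.add_sub_cancel]
    ring

theorem stmt14 (p e q : ℕ) [Fact p.Prime] (hodd : Odd p) (he : 0 < e) (hq : q = p ^ e)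
    (Fq : Type) [Field Fq] [Fintype Fq] [Algebra (ZMod p) Fq]
    (hcq : Fintype.card Fq = q)
    (f : Fq → ZMod p) (ε : ℤ) (fstar : Fq → ZMod p) (hRF : IsRF p e Fq f ε fstar)
    (s : ZMod p) (hs : s ≠ 0) (a : ZMod p) (b : Fq)
    (Ns : ℕ)
    (hNs : Ns = Nat.card {x : Fq //
      a * f x + Algebra.trace (ZMod p) Fq (b * x) = s}) :
    (Even e →
      (a = 0 ∧ b = 0 → Ns = 0) ∧
      (a = 0 ∧ b ≠ 0 → Ns = p ^ (e - 1)) ∧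
      (a ≠ 0 ∧ fstar (-b / algebraMap (ZMod p) Fq a) = a⁻¹ * s →
        (Ns : ℤ) = (p : ℤ) ^ (e - 1)
          + ε * qchar (ZMod p) (-1) ^ (e / 2) * ((p : ℤ) - 1) * (p : ℤ) ^ (e / 2 - 1)) ∧
      (a ≠ 0 ∧ fstar (-b / algebraMap (ZMod p) Fq a) ≠ a⁻¹ * s →
        (Ns : ℤ) = (p : ℤ) ^ (e - 1)
          - ε * qchar (ZMod p) (-1) ^ (e / 2) * (p : ℤ) ^ (e / 2 - 1))) ∧
    (Odd e →
      (a = 0 ∧ b = 0 → Ns = 0) ∧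
      ((a = 0 ∧ b ≠ 0) ∨ (a ≠ 0 ∧ fstar (-b / algebraMap (ZMod p) Fq a) = a⁻¹ * s) →
        Ns = p ^ (e - 1)) ∧
      (a ≠ 0 ∧ fstar (-b / algebraMap (ZMod p) Fq a) ≠ a⁻¹ * s ∧
          qchar (ZMod p) (fstar (-b / algebraMap (ZMod p) Fq a) - a⁻¹ * s) = 1 →
        (Ns : ℤ) = (p : ℤ) ^ (e - 1)
          + ε * qchar (ZMod p) (-1) ^ ((e + 1) / 2) * (p : ℤ) ^ ((e - 1) / 2)) ∧
      (a ≠ 0 ∧ fstar (-b / algebraMap (ZMod p) Fq a) ≠ a⁻¹ * s ∧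
          qchar (ZMod p) (fstar (-b / algebraMap (ZMod p) Fq a) - a⁻¹ * s) = -1 →
        (Ns : ℤ) = (p : ℤ) ^ (e - 1)
          - ε * qchar (ZMod p) (-1) ^ ((e + 1) / 2) * (p : ℤ) ^ ((e - 1) / 2))) := by
  subst hq
  obtain ⟨m, hm⟩ := hodd
  have hA0 : a = 0 ∧ b = 0 → Ns = 0 := by
    rintro ⟨rfl, rfl⟩
    rw [hNs, Nat.card_eq_zero]
    left
    refine ⟨fun x => hs ?_⟩
    have := x.2
    simpa using this.symm
  have hA1 : a = 0 ∧ b ≠ 0 → Ns = p ^ (e - 1) := by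
    rintro ⟨rfl, hb⟩
    rw [hNs, ← count_lin p e he Fq hcq b hb s]
    simp only [zero_mul, zero_add]
  have hB : a ≠ 0 → _ := fun ha => count_bent p m e hm he hcq
    (fun x : Fq => f x - Algebra.trace (ZMod p) Fq (-b / algebraMap (ZMod p) Fq a * x)) ε _
    (hRF.walsh (-b / algebraMap (ZMod p) Fq a)) (a⁻¹ * s)
  have hN : a ≠ 0 → Nat.card {x : Fq // f x - Algebra.trace (ZMod p) Fq
      (-b / algebraMap (ZMod p) Fq a * x) = a⁻¹ * s} = Ns := by
    intro ha
    rw [hNs]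
    refine Nat.card_congr (Equiv.subtypeEquivRight fun x => ?_)
    have h1 : -b / algebraMap (ZMod p) Fq a * x = (-a⁻¹) • (b * x) := by
      rw [Algebra.smul_def, map_neg, map_inv₀]
      ring
    rw [h1, map_smul, smul_eq_mul, eq_inv_mul_iff_mul_eq₀ ha, mul_sub, neg_mul, mul_neg,
      mul_inv_cancel_left₀ ha, sub_neg_eq_add]
  simp only [qchar_eq]
  refine ⟨fun hev => ⟨hA0, hA1, ?_, ?_⟩, fun hod => ⟨hA0, ?_, ?_, ?_⟩⟩
  · rintro ⟨ha, hc⟩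
    have h := (hB ha).1 hev
    rw [hN ha, if_pos hc] at h
    exact h
  · rintro ⟨ha, hc⟩
    have h := (hB ha).1 hev
    rw [hN ha, if_neg hc] at h
    rw [h]
    ring
  · rintro (h | ⟨ha, hc⟩)
    · exact hA1 h
    · have h := (hB ha).2 hod
      rw [hN ha, hc, sub_self, MulChar.map_zero] at h
      simp only [mul_zero, zero_mul, add_zero] at h
      exact_mod_cast h
  · rintro ⟨ha, -, hc⟩
    have h := (hB ha).2 hod
    rw [hN ha, hc] at h
    rw [h]
    ring
  · rintro ⟨ha, -, hc⟩
    have h := (hB ha).2 hod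
    rw [hN ha, hc] at h
    rw [h]
    ring
end
end

section
/- Let e ≥ 2 and let f : F_q → F_p belong to the class RF with sign ε and dual f*. Then C_f is an F_p-linear code of length q = p^e and dimension e + 2. If e is even, with σ = ε(η_0(−1))^{e/2}, the multiset of Hamming weights of its codewords consists of: weight 0 with multiplicity 1; weight p^e − p^{e−1} − σ(p−1)p^{e/2−1} with multiplicity (p−1)p^e; weight p^e − p^{e−1} + σ p^{e/2−1} with multiplicity (p−1)² p^e; weight p^e − p^{e−1} with multiplicity p(p^e − 1); and weight p^e with multiplicity p − 1. If e is odd, with τ = ε(η_0(−1))^{(e+1)/2}, the multiset of weights consists of: weight 0 with multiplicity 1; weight p^e − p^{e−1} − τ p^{(e−1)/2} with multiplicity (p−1)² p^e / 2; weight p^e − p^{e−1} + τ p^{(e−1)/2} with multiplicity (p−1)² p^e / 2; weight p^e − p^{e−1} with multiplicity 2p^{e+1} − p^e − p; and weight p^e with multiplicity p − 1. Moreover, C_f is self-orthogonal (C_f ⊆ C_f^⊥) whenever e ≥ 3. The dual code C_f^⊥ has length p^e, dimension p^e − e − 2, and minimum distance 4 if e = 2 and ε η_0(−1) = −1, and minimum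 distance 3 in all other cases. -/
open scoped Classical

noncomputable section

/-- The code `C_f` attached to `f`. -/
def rfCode (p : ℕ) (Fq : Type*) [Field Fq] [Fintype Fq] [Algebra (ZMod p) Fq]
    (f : Fq → ZMod p) : Set (Fq → ZMod p) :=
  {w | ∃ a c : ZMod p, ∃ b : Fq, ∀ x : Fq,
    w x = a * f x + Algebra.trace (ZMod p) Fq (b * x) + c}

/-- The dual code under the standard inner product. -/
def dualCode {ι F : Type*} [Fintype ι] [CommRing F] (C : Set (ι → F)) : Set (ι → F) :=
  {u | ∀ v ∈ C, ∑ i, u i * v i = 0}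

/-- `d` is the minimum distance of the code `C`: the smallest Hamming weight of a
nonzero codeword. -/
def IsMinDist {ι F : Type*} [Fintype ι] [CommRing F] (C : Set (ι → F)) (d : ℕ) : Prop :=
  (∃ c ∈ C, c ≠ 0 ∧ hammingNorm c = d) ∧ ∀ c ∈ C, c ≠ 0 → d ≤ hammingNorm c

namespace RF

theorem zeta_prim (p : ℕ) [Fact p.Prime] : IsPrimitiveRoot (zetapc p) p :=
  Complex.isPrimitiveRoot_exp p (Fact.out : p.Prime).ne_zero

/-- the standard additive character -/
def psi (p : ℕ) [Fact p.Prime] : AddChar (ZMod p) ℂ :=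
  AddChar.zmodChar p (zeta_prim p).pow_eq_one

theorem psi_apply (p : ℕ) [Fact p.Prime] (v : ZMod p) : psi p v = zetapc p ^ v.val :=
  AddChar.zmodChar_apply _ _

theorem psi_prim (p : ℕ) [Fact p.Prime] : (psi p).IsPrimitive :=
  AddChar.zmodChar_primitive_of_primitive_root p (zeta_prim p)

theorem psi_pow (p : ℕ) [Fact p.Prime] (k v : ZMod p) :
    psi p (k * v) = (zetapc p ^ k.val) ^ v.val := by
  rw [← pow_mul, psi_apply]
  conv_rhs => rw [pow_eq_pow_mod _ (zeta_prim p).pow_eq_one]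
  rw [ZMod.val_mul]

/-- the quadratic character, complex valued -/
def chi (p : ℕ) [Fact p.Prime] : MulChar (ZMod p) ℂ :=
  (quadraticChar (ZMod p)).ringHomComp (Int.castRingHom ℂ)

theorem chi_apply (p : ℕ) [Fact p.Prime] (a : ZMod p) :
    chi p a = (quadraticChar (ZMod p) a : ℂ) := rfl

theorem ringChar_ne {p : ℕ} [Fact p.Prime] (hodd : Odd p) : ringChar (ZMod p) ≠ 2 := by
  rw [ZMod.ringChar_zmod_n]
  rintro rfl
  exact absurd hodd (by decide)

theorem chi_ne_one {p : ℕ} [Fact p.Prime] (hodd : Odd p) : chi p ≠ 1 :=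
  (MulChar.ringHomComp_ne_one_iff (RingHom.injective_int _)).mpr
    (quadraticChar_ne_one (ringChar_ne hodd))

theorem chi_quad (p : ℕ) [Fact p.Prime] : (chi p).IsQuadratic :=
  (quadraticChar_isQuadratic (ZMod p)).comp _

theorem gauss_shift {p : ℕ} [Fact p.Prime] (hodd : Odd p) (a : ZMod p) :
    gaussSum (chi p) ((psi p).mulShift a) = chi p a * gaussSum (chi p) (psi p) := by
  by_cases ha : a = 0
  · subst ha
    have := MulChar.sum_eq_zero_of_ne_one (chi_ne_one hodd)
    simp [gaussSum, this, MulChar.map_zero (chi p)]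
  · have := gaussSum_mulShift_eq (chi p) (psi p) (Units.mk0 a ha)
    rw [(chi_quad p).inv] at this
    exact this

theorem sqrtpstar_sq (p : ℕ) [Fact p.Prime] (hodd : Odd p) :
    sqrtpstar p ^ 2 = chi p (-1) * p := by
  have h2 : ((Real.sqrt p : ℝ) : ℂ) ^ 2 = p := by
    rw [← Complex.ofReal_pow, Real.sq_sqrt (by positivity)]; simp
  rw [sqrtpstar, mul_pow, h2, ← pow_mul, mul_comm _ 2, pow_mul, Complex.I_sq, chi_apply,
    quadraticChar_neg_one (ringChar_ne hodd), ZMod.card, ZMod.χ₄_eq_neg_one_pow]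
  · congr 1
    push_cast
    have : (p - 1) / 2 = p / 2 := by
      obtain ⟨k, rfl⟩ := hodd
      omega
    rw [this]
    rcases Nat.even_or_odd (p / 2) with h | h
    · rw [h.neg_one_pow, (h.pow_of_ne_zero two_ne_zero).neg_one_pow]
    · rw [h.neg_one_pow, h.pow.neg_one_pow]
  · exact Nat.odd_iff.mp hodd

theorem exists_sign (p : ℕ) [Fact p.Prime] (hodd : Odd p) :
    ∃ s : ℤ, (s = 1 ∨ s = -1) ∧ sqrtpstar p = s * gaussSum (chi p) (psi p) := by
  have h := gaussSum_sq (χ := chi p) (chi_ne_one hodd) (chi_quad p) (psi_prim p)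
  rw [ZMod.card, ← sqrtpstar_sq p hodd] at h
  rcases sq_eq_sq_iff_eq_or_eq_neg.mp h.symm with h | h
  · exact ⟨1, Or.inl rfl, by simpa using h⟩
  · exact ⟨-1, Or.inr rfl, by simpa using h⟩

open Polynomial in
/-- Galois conjugation, by hand. -/
theorem galois {p : ℕ} [Fact p.Prime] (P : ℤ[X]) (h : aeval (zetapc p) P = 0) (k : ZMod p)
    (hk : k ≠ 0) : aeval (zetapc p ^ k.val) P = 0 := by
  have hp : p.Prime := Fact.out
  have hint := (zeta_prim p).isIntegral hp.pos
  have hd := minpoly.isIntegrallyClosed_dvd hint h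
  have hcop : Nat.Coprime k.val p := by
    rw [Nat.coprime_comm, hp.coprime_iff_not_dvd]
    intro hd
    have := Nat.le_of_dvd (Nat.pos_of_ne_zero (by simpa using hk)) hd
    exact absurd (ZMod.val_lt k) (by omega)
  rw [(zeta_prim p).minpoly_eq_pow_coprime hcop] at hd
  obtain ⟨Q, rfl⟩ := hd
  simp [minpoly.aeval]

open Polynomial in
theorem walsh_conj {p : ℕ} [Fact p.Prime] (hodd : Odd p) {Y : Type*} [Fintype Y]
    (g : Y → ZMod p) (e : ℕ) (ε : ℤ) (t : ZMod p)
    (h : ∑ x, psi p (g x) = ε * sqrtpstar p ^ e * psi p t) (k : ZMod p) (hk : k ≠ 0) :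
    ∑ x, psi p (k * g x) = ε * sqrtpstar p ^ e * chi p k ^ e * psi p (k * t) := by
  obtain ⟨s, -, hs⟩ := exists_sign p hodd
  let P : ℤ[X] := ∑ x, X ^ (g x).val -
    C ε * (C s * ∑ y : ZMod p, C (quadraticChar (ZMod p) y) * X ^ y.val) ^ e * X ^ t.val
  have hP : aeval (zetapc p) P = 0 := by
    simp only [P, map_sub, map_sum, map_mul, map_pow, aeval_X, aeval_C, sub_eq_zero]
    simp only [psi_apply, hs, gaussSum, chi_apply] at h
    simpa using h
  have := galois P hP k hk
  simp only [P, map_sub, map_sum, map_mul, map_pow, aeval_X, aeval_C, sub_eq_zero] at this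
  simp only [← psi_pow] at this
  rw [this, hs]
  have h2 := gauss_shift hodd k
  simp only [gaussSum, AddChar.mulShift_apply, chi_apply] at h2
  simp only [chi_apply, gaussSum, algebraMap_int_eq, eq_intCast]
  rw [h2]
  ring

theorem card_zeros {p : ℕ} [Fact p.Prime] {X : Type*} [Fintype X] (w : X → ZMod p) :
    (p : ℂ) * ((Finset.univ.filter fun x => w x = 0).card : ℂ)
      = Fintype.card X + ∑ y ∈ Finset.univ.erase (0 : ZMod p), ∑ x, psi p (y * w x) := by
  have h1 : ∀ x, ∑ y : ZMod p, psi p (y * w x) = if w x = 0 then (p : ℂ) else 0 := by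
    intro x
    rw [AddChar.sum_mulShift _ (psi_prim p), ZMod.card]
    split_ifs <;> simp
  have h2 : ∑ y : ZMod p, ∑ x, psi p (y * w x) =
      (p : ℂ) * ((Finset.univ.filter fun x => w x = 0).card : ℂ) := by
    rw [Finset.sum_comm]
    simp only [h1]
    rw [← Finset.sum_filter, Finset.sum_const, nsmul_eq_mul, mul_comm]
  rw [← h2, ← Finset.add_sum_erase _ _ (Finset.mem_univ (0 : ZMod p))]
  simp

theorem norm_add_zeros {p : ℕ} {X : Type*} [Fintype X] (w : X → ZMod p) :
    hammingNorm w + (Finset.univ.filter fun x => w x = 0).card = Fintype.card X := by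
  rw [hammingNorm, add_comm, Finset.card_filter_add_card_filter_not, Finset.card_univ]

/-- the parametrization of the code -/
def phi {p : ℕ} [Fact p.Prime] {Fq : Type} [Field Fq] [Fintype Fq] [Algebra (ZMod p) Fq]
    (f : Fq → ZMod p) : (ZMod p × Fq × ZMod p) →ₗ[ZMod p] (Fq → ZMod p) where
  toFun v := fun x => v.1 * f x + Algebra.trace (ZMod p) Fq (v.2.1 * x) + v.2.2
  map_add' u v := by
    funext x
    simp only [Prod.fst_add, Prod.snd_add, add_mul, map_add, Pi.add_apply]
    ring
  map_smul' r v := by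
    funext x
    simp only [Prod.smul_fst, Prod.smul_snd, smul_mul_assoc, map_smul, smul_eq_mul, Pi.smul_apply,
      RingHom.id_apply]
    ring

theorem char_sum {p e : ℕ} [Fact p.Prime] (hodd : Odd p)
    {Fq : Type} [Field Fq] [Fintype Fq] [Algebra (ZMod p) Fq]
    {f : Fq → ZMod p} {ε : ℤ} {fstar : Fq → ZMod p} (hRF : IsRF p e Fq f ε fstar)
    (a : ZMod p) (ha : a ≠ 0) (b : Fq) (c y : ZMod p) (hy : y ≠ 0) :
    ∑ x, psi p (y * phi f (a, b, c) x) = ε * sqrtpstar p ^ e * chi p (y * a) ^ e *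
      psi p (y * (c + a * fstar (-(a⁻¹ • b)))) := by
  have h := hRF.walsh (-(a⁻¹ • b))
  simp only [← psi_apply] at h
  have h2 := walsh_conj hodd _ e ε _ h (y * a) (mul_ne_zero hy ha)
  have h3 : ∀ x, psi p (y * phi f (a, b, c) x) = psi p (y * c) *
      psi p (y * a * (f x - Algebra.trace (ZMod p) Fq (-(a⁻¹ • b) * x))) := by
    intro x
    rw [← AddChar.map_add_eq_mul]
    congr 1
    simp only [phi, LinearMap.coe_mk, AddHom.coe_mk, neg_mul, map_neg, smul_mul_assoc, map_smul,
      smul_eq_mul]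
    field_simp
    ring
  simp only [h3]
  rw [← Finset.mul_sum, h2, mul_add, AddChar.map_add_eq_mul, mul_assoc y a]
  ring

theorem qchar_eq (p : ℕ) [Fact p.Prime] (a : ZMod p) : qchar (ZMod p) a = quadraticChar (ZMod p) a := by
  rw [quadraticChar_apply, quadraticCharFun, qchar]
  congr

theorem sq_pow_even (p e : ℕ) [Fact p.Prime] (hodd : Odd p) (he : Even e) :
    sqrtpstar p ^ e = (qchar (ZMod p) (-1) : ℂ) ^ (e / 2) * (p : ℂ) ^ (e / 2) := by
  obtain ⟨k, rfl⟩ := he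
  rw [← two_mul, Nat.mul_div_cancel_left _ two_pos, pow_mul, sqrtpstar_sq p hodd, mul_pow,
    chi_apply, qchar_eq]

theorem zeros_even {p e : ℕ} [Fact p.Prime] (hodd : Odd p) (he : 2 ≤ e) (hev : Even e)
    {Fq : Type} [Field Fq] [Fintype Fq] [Algebra (ZMod p) Fq] (hc : Fintype.card Fq = p ^ e)
    {f : Fq → ZMod p} {ε : ℤ} {fstar : Fq → ZMod p} (hRF : IsRF p e Fq f ε fstar)
    (a : ZMod p) (ha : a ≠ 0) (b : Fq) (c : ZMod p) :
    (hammingNorm (phi f (a, b, c)) : ℤ) = if c + a * fstar (-(a⁻¹ • b)) = 0 then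
        (p : ℤ) ^ e - (p : ℤ) ^ (e - 1)
          - ε * qchar (ZMod p) (-1) ^ (e / 2) * ((p : ℤ) - 1) * (p : ℤ) ^ (e / 2 - 1)
      else (p : ℤ) ^ e - (p : ℤ) ^ (e - 1)
          + ε * qchar (ZMod p) (-1) ^ (e / 2) * (p : ℤ) ^ (e / 2 - 1) := by
  have hp : (p : ℂ) ≠ 0 := by exact_mod_cast (Fact.out : p.Prime).ne_zero
  have h1 := card_zeros (phi f (a, b, c))
  rw [Finset.sum_congr rfl fun y hy => char_sum hodd hRF a ha b c y (Finset.ne_of_mem_erase hy)] at h1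
  set t := c + a * fstar (-(a⁻¹ • b)) with ht
  have h4 : ∀ y ∈ Finset.univ.erase (0 : ZMod p), (ε : ℂ) * sqrtpstar p ^ e * chi p (y * a) ^ e *
      psi p (y * t) = ε * sqrtpstar p ^ e * psi p (y * t) := by
    intro y hy
    have : chi p (y * a) ^ e = 1 := by
      rw [chi_apply, ← Int.cast_pow]
      obtain ⟨k, rfl⟩ := hev
      rw [← two_mul, pow_mul, quadraticChar_sq_one (mul_ne_zero (Finset.ne_of_mem_erase hy) ha)]
      simp
    rw [this, mul_one]
  rw [Finset.sum_congr rfl h4, ← Finset.mul_sum] at h1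
  have h5 := AddChar.sum_mulShift t (psi_prim p)
  rw [← Finset.add_sum_erase _ _ (Finset.mem_univ (0 : ZMod p))] at h5
  have h6 : ∑ x ∈ Finset.univ.erase (0 : ZMod p), psi p (x * t) =
      (if t = 0 then (p : ℂ) else 0) - 1 := by
    rw [eq_sub_iff_add_eq, add_comm]
    rw [zero_mul, AddChar.map_zero_eq_one, ZMod.card] at h5
    rw [h5]
    split_ifs <;> simp
  have h7 := norm_add_zeros (phi f (a, b, c))
  rw [h6, hc, sq_pow_even p e hodd hev] at h1
  rw [hc] at h7
  have h7' : (hammingNorm (phi f (a, b, c)) : ℂ) + ((Finset.univ.filter fun x => phi f (a, b, c) x = 0).card : ℂ) = (p : ℂ) ^ e := by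
    exact_mod_cast h7
  have e1 : (p : ℂ) ^ e = p * (p : ℂ) ^ (e - 1) := by
    rw [← pow_succ', Nat.sub_add_cancel (by omega)]
  have e2 : (p : ℂ) ^ (e / 2) = p * (p : ℂ) ^ (e / 2 - 1) := by
    rw [← pow_succ', Nat.sub_add_cancel (by omega)]
  have key : (hammingNorm (phi f (a, b, c)) : ℂ) = (p : ℂ) ^ e - (p : ℂ) ^ (e - 1)
      - ε * (qchar (ZMod p) (-1) : ℂ) ^ (e / 2) * (p : ℂ) ^ (e / 2 - 1) *
        ((if t = 0 then (p : ℂ) else 0) - 1) := by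
    rw [eq_sub_of_add_eq h7']
    apply mul_left_cancel₀ hp
    rw [mul_sub, h1]
    push_cast
    rw [e2]
    linear_combination -e1
  have : ((hammingNorm (phi f (a, b, c)) : ℤ) : ℂ) = hammingNorm (phi f (a, b, c)) := by simp
  split_ifs with h0 <;> apply Int.cast_injective (α := ℂ) <;> rw [this, key]
  · rw [if_pos h0]; push_cast; ring
  · rw [if_neg h0]; push_cast; ring

theorem zeros_odd {p e : ℕ} [Fact p.Prime] (hodd : Odd p) (he : 2 ≤ e) (hev : Odd e) :
    ∃ s : ℤ, (s = 1 ∨ s = -1) ∧ 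
    ∀ {Fq : Type} [Field Fq] [Fintype Fq] [Algebra (ZMod p) Fq] (_ : Fintype.card Fq = p ^ e)
    {f : Fq → ZMod p} {ε : ℤ} {fstar : Fq → ZMod p} (_ : IsRF p e Fq f ε fstar)
    (a : ZMod p) (_ : a ≠ 0) (b : Fq) (c : ZMod p), 
    (hammingNorm (phi f (a, b, c)) : ℤ) = 
        (p : ℤ) ^ e - (p : ℤ) ^ (e - 1)
          - s * quadraticChar (ZMod p) (a * (c + a * fstar (-(a⁻¹ • b)))) *
          (ε * qchar (ZMod p) (-1) ^ ((e + 1) / 2) * (p : ℤ) ^ ((e - 1) / 2)) := by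
  have hp : (p : ℂ) ≠ 0 := by exact_mod_cast (Fact.out : p.Prime).ne_zero
  obtain ⟨s, hs, hsg⟩ := exists_sign p hodd
  refine ⟨s, hs, ?_⟩
  intro Fq _ _ _ hc f ε fstar hRF a ha b c
  have h1 := card_zeros (phi f (a, b, c))
  rw [Finset.sum_congr rfl fun y hy => char_sum hodd hRF a ha b c y (Finset.ne_of_mem_erase hy)] at h1
  set t := c + a * fstar (-(a⁻¹ • b)) with ht
  have hpow : ∀ u : ZMod p, chi p u ^ e = chi p u := by
    intro u
    rcases chi_quad p u with h | h | h <;> rw [h]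
    · exact zero_pow (by omega)
    · simp
    · exact hev.neg_one_pow
  simp only [hpow] at h1
  have h5 : ∑ y ∈ Finset.univ.erase (0 : ZMod p), (ε : ℂ) * sqrtpstar p ^ e * chi p (y * a) *
      psi p (y * t) = ε * sqrtpstar p ^ e * chi p a * (chi p t * gaussSum (chi p) (psi p)) := by
    rw [← gauss_shift hodd, gaussSum, Finset.mul_sum, Finset.sum_erase _ (by simp [MulChar.map_zero (chi p)])]
    refine Finset.sum_congr rfl fun y _ => ?_
    rw [AddChar.mulShift_apply, mul_comm t y, map_mul]
    ring
  have hg : gaussSum (chi p) (psi p) = s * sqrtpstar p := by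
    rw [hsg]; rcases hs with rfl | rfl <;> simp
  have h7 := norm_add_zeros (phi f (a, b, c))
  have hS := sq_pow_even p (e + 1) hodd hev.add_one
  have h6 : (ε : ℂ) * sqrtpstar p ^ e * chi p a * (chi p t * gaussSum (chi p) (psi p)) =
     s * ε * (chi p (a * t)) * (sqrtpstar p ^ (e + 1)) := by
    rw [hg, map_mul]; ring
  rw [h5, h6, hc, hS] at h1
  rw [hc] at h7
  have h7' : (hammingNorm (phi f (a, b, c)) : ℂ) + ((Finset.univ.filter fun x => phi f (a, b, c) x = 0).card : ℂ) = (p : ℂ) ^ e := by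
    exact_mod_cast h7
  have e1 : (p : ℂ) ^ e = p * (p : ℂ) ^ (e - 1) := by
    rw [← pow_succ', Nat.sub_add_cancel (by omega)]
  have e2 : (p : ℂ) ^ ((e + 1) / 2) = p * (p : ℂ) ^ ((e - 1) / 2) := by
    rw [← pow_succ']; congr 1; omega
  have : ((hammingNorm (phi f (a, b, c)) : ℤ) : ℂ) = hammingNorm (phi f (a, b, c)) := by simp
  apply Int.cast_injective (α := ℂ)
  rw [this, eq_sub_of_add_eq h7']
  apply mul_left_cancel₀ hp
  rw [mul_sub, h1, chi_apply]
  push_cast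
  rw [e2]
  linear_combination -e1

section
variable {p e : ℕ} [Fact p.Prime] {Fq : Type} [Field Fq] [Fintype Fq] [Algebra (ZMod p) Fq]

theorem phi_apply (f : Fq → ZMod p) (a c : ZMod p) (b x : Fq) :
    phi f (a, b, c) x = a * f x + Algebra.trace (ZMod p) Fq (b * x) + c := rfl

theorem trace_ne (b : Fq) (hb : b ≠ 0) : ∃ x, Algebra.trace (ZMod p) Fq (b * x) ≠ 0 := by
  have := (traceForm_nondegenerate (ZMod p) Fq).1
  by_contra! h
  exact hb (this b h)

theorem psi_ne_one (k : ZMod p) (hk : k ≠ 0) : psi p k ≠ 1 := by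
  rw [psi_apply, Ne, (zeta_prim p).pow_eq_one_iff_dvd]
  intro hd
  have := Nat.le_of_dvd (Nat.pos_of_ne_zero (by simpa using hk)) hd
  exact absurd (ZMod.val_lt k) (by omega)

theorem wt_const (hc : Fintype.card Fq = p ^ e) (f : Fq → ZMod p) (c : ZMod p) :
    (hammingNorm (phi f (0, 0, c)) : ℤ) = if c = 0 then 0 else (p : ℤ) ^ e := by
  have h := norm_add_zeros (phi f (0, 0, c))
  simp only [phi_apply, zero_mul, map_zero, zero_add] at h
  split_ifs with h0
  · simp only [h0, Finset.filter_true, Finset.card_univ] at h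
    subst h0
    omega
  · simp only [h0, Finset.filter_false, Finset.card_empty, add_zero, hc] at h
    exact_mod_cast h

theorem wt_lin (he : 1 ≤ e) (hc : Fintype.card Fq = p ^ e) (f : Fq → ZMod p) (b : Fq) (hb : b ≠ 0)
    (c : ZMod p) :
    (hammingNorm (phi f (0, b, c)) : ℤ) = (p : ℤ) ^ e - (p : ℤ) ^ (e - 1) := by
  have hp : (p : ℂ) ≠ 0 := by exact_mod_cast (Fact.out : p.Prime).ne_zero
  have h := norm_add_zeros (phi f (0, b, c))
  have h1 := card_zeros (phi f (0, b, c))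
  obtain ⟨x0, hx0⟩ := trace_ne (p := p) b hb
  rw [Finset.sum_eq_zero, add_zero, hc] at h1
  · have e1 : (p : ℂ) ^ e = p * (p : ℂ) ^ (e - 1) := by
      rw [← pow_succ', Nat.sub_add_cancel (by omega)]
    push_cast at h1
    rw [e1] at h1
    have h2 := mul_left_cancel₀ hp h1
    rw [← Nat.cast_pow, Nat.cast_inj] at h2
    rw [h2, hc] at h
    rw [eq_sub_iff_add_eq]
    exact_mod_cast h
  · intro y hy
    have hy0 := Finset.ne_of_mem_erase hy
    have h3 : ∑ x, psi p (y * phi f (0, b, c) x) =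
        psi p (y * Algebra.trace (ZMod p) Fq (b * x0)) * ∑ x, psi p (y * phi f (0, b, c) x) := by
      rw [Finset.mul_sum]
      refine (Fintype.sum_equiv (Equiv.addRight x0) _ _ fun x => rfl).symm.trans ?_
      refine Finset.sum_congr rfl fun x _ => ?_
      rw [← AddChar.map_add_eq_mul]
      congr 1
      simp only [phi_apply, Equiv.coe_addRight, mul_add, map_add]
      ring
    by_contra h4
    exact psi_ne_one _ (mul_ne_zero hy0 hx0) (mul_right_cancel₀ h4 (by rw [one_mul]; exact h3.symm))

theorem qsign (n : ℕ) {ε : ℤ} (hε : ε = 1 ∨ ε = -1) :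
    ε * qchar (ZMod p) (-1) ^ n = 1 ∨ ε * qchar (ZMod p) (-1) ^ n = -1 := by
  have : qchar (ZMod p) (-1) = 1 ∨ qchar (ZMod p) (-1) = -1 := by
    rw [qchar_eq]; exact quadraticChar_dichotomy (neg_ne_zero.mpr one_ne_zero)
  have h2 : qchar (ZMod p) (-1) ^ n = 1 ∨ qchar (ZMod p) (-1) ^ n = -1 := by
    rcases this with h | h <;> rw [h]
    · simp
    · exact neg_one_pow_eq_or ℤ n
  rcases hε with rfl | rfl <;> rcases h2 with h | h <;> simp [h]

theorem three_le (hodd : Odd p) : 3 ≤ p := by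
  have h2 := (Fact.out : p.Prime).two_le
  obtain ⟨k, rfl⟩ := hodd
  omega

/-- Bounds for the weights. -/
theorem wt_bounds (hodd : Odd p) (he : 2 ≤ e) (hc : Fintype.card Fq = p ^ e)
    {f : Fq → ZMod p} {ε : ℤ} {fstar : Fq → ZMod p} (hRF : IsRF p e Fq f ε fstar)
    (a : ZMod p) (ha : a ≠ 0) (b : Fq) (c : ZMod p) :
    0 < hammingNorm (phi f (a, b, c)) ∧
    (¬(e = 2 ∧ ε * qchar (ZMod p) (-1) = -1) → hammingNorm (phi f (a, b, c)) + 2 ≤ p ^ e) ∧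
    (3 ≤ e → p ∣ hammingNorm (phi f (a, b, c))) ∧
    ((e = 2 ∧ ε * qchar (ZMod p) (-1) = -1) → p ^ e ≤ hammingNorm (phi f (a, b, c)) + p + 1) := by
  have h3 : (3 : ℤ) ≤ p := by exact_mod_cast three_le hodd
  suffices H : (0 : ℤ) < hammingNorm (phi f (a, b, c)) ∧
      (¬(e = 2 ∧ ε * qchar (ZMod p) (-1) = -1) →
        (hammingNorm (phi f (a, b, c)) : ℤ) + 2 ≤ (p : ℤ) ^ e) ∧
      (3 ≤ e → (p : ℤ) ∣ (hammingNorm (phi f (a, b, c)) : ℤ)) ∧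
      ((e = 2 ∧ ε * qchar (ZMod p) (-1) = -1) →
        (p : ℤ) ^ e ≤ (hammingNorm (phi f (a, b, c)) : ℤ) + p + 1) by exact_mod_cast H
  rcases Nat.even_or_odd e with hev | hev
  · have h := zeros_even hodd he hev hc hRF a ha b c
    obtain ⟨k, rfl⟩ := hev
    obtain ⟨m, rfl⟩ : ∃ m, k = m + 1 := ⟨k - 1, by omega⟩
    have e1 : (m + 1 + (m + 1)) / 2 = m + 1 := by omega
    have e2 : m + 1 + (m + 1) - 1 = 2 * m + 1 := by omega
    have e3 : (p : ℤ) ^ (m + 1 + (m + 1)) = (p ^ m) ^ 2 * p ^ 2 := by ring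
    have e4 : (p : ℤ) ^ (2 * m + 1) = (p ^ m) ^ 2 * p := by ring
    rw [e1, e2, Nat.add_sub_cancel] at h
    have hs := qsign (p := p) (m + 1) hRF.sign
    rw [e3, e4] at h
    rw [e3]
    have hm : m = 0 ∨ 1 ≤ m := by omega
    have hq1 : (1 : ℤ) ≤ p ^ m := one_le_pow₀ (by linarith)
    have hm' : (m = 0 ∧ (p : ℤ) ^ m = 1) ∨ (1 ≤ m ∧ (p : ℤ) ∣ p ^ m ∧ (3 : ℤ) ≤ p ^ m) := by
      rcases hm with rfl | hm
      · left; simp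
      · right
        have := dvd_pow_self (p : ℤ) (show m ≠ 0 by omega)
        exact ⟨hm, this, h3.trans (Int.le_of_dvd (by linarith) this)⟩
    have hz : m = 0 → ε * qchar (ZMod p) (-1) ^ (m + 1) = ε * qchar (ZMod p) (-1) := by
      rintro rfl; simp
    generalize hQ : (p : ℤ) ^ m = Q at *
    generalize hW : (hammingNorm (phi f (a, b, c)) : ℤ) = W at *
    generalize hσ : ε * qchar (ZMod p) (-1) ^ (m + 1) = σ at *
    generalize hP : (p : ℤ) = P at *
    have hd : W = (P - 1) * Q * (Q * P - σ) ∨ W = Q * (Q * P * (P - 1) + σ) := by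
      split_ifs at h
      · left; rw [h]; ring
      · right; rw [h]; ring
    clear h
    refine ⟨?_, ?_, ?_, ?_⟩
    · have hQP : 3 ≤ Q * P := by nlinarith
      have : 0 < (P - 1) * Q := by nlinarith
      rcases hd with rfl | rfl
      · apply mul_pos this; rcases hs with rfl | rfl <;> linarith
      · apply mul_pos (by linarith)
        rcases hs with rfl | rfl <;> nlinarith
    · intro hn
      rcases hm' with ⟨rfl, rfl⟩ | ⟨hm1, -, hQ3⟩
      · have : σ = 1 := by
          rcases hs with h | h
          · exact h
          · exact absurd ⟨rfl, by rw [← hz rfl, h]⟩ hn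
        subst this
        rcases hd with rfl | rfl <;> nlinarith
      · have hQP : 9 ≤ Q * P := by nlinarith
        have h1 : P * Q ≥ P * 3 := by nlinarith
        have hk : Q * (P - 1) + 2 ≤ Q * (Q * P) := by
          have : Q * (P * 3) ≤ Q * (Q * P) := by nlinarith
          nlinarith
        rcases hd with rfl | rfl <;> rcases hs with rfl | rfl <;> nlinarith
    · intro h3e
      rcases hm' with ⟨rfl, rfl⟩ | ⟨hm1, hdv, hQ3⟩
      · omega
      · rcases hd with rfl | rfl
        · exact Dvd.dvd.mul_right (Dvd.dvd.mul_left hdv _) _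
        · exact Dvd.dvd.mul_right hdv _
    · rintro ⟨h2e, hεq⟩
      have hm0 : m = 0 := by omega
      have : σ = -1 := by rw [hz hm0, hεq]
      subst this hm0
      rw [pow_zero] at hQ
      subst hQ
      rcases hd with rfl | rfl <;> nlinarith
  · obtain ⟨s, hs1, hs2⟩ := zeros_odd hodd he hev
    have h := hs2 hc hRF a ha b c
    obtain ⟨k, rfl⟩ := hev
    obtain ⟨m, rfl⟩ : ∃ m, k = m + 1 := ⟨k - 1, by omega⟩
    have e1 : (2 * (m + 1) + 1 - 1) / 2 = m + 1 := by omega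
    have e2 : 2 * (m + 1) + 1 - 1 = 2 * (m + 1) := by omega
    have e3 : (p : ℤ) ^ (2 * (m + 1) + 1) = (p ^ (m + 1)) ^ 2 * p := by ring
    have e4 : (p : ℤ) ^ (2 * (m + 1)) = (p ^ (m + 1)) ^ 2 := by ring
    have hs := qsign (p := p) ((2 * (m + 1) + 1 + 1) / 2) hRF.sign
    rw [e1, e2, e3, e4] at h
    rw [e3]
    have hdv : (p : ℤ) ∣ p ^ (m + 1) := dvd_pow_self (p : ℤ) (by omega)
    have hQ3 : (3 : ℤ) ≤ p ^ (m + 1) := h3.trans (Int.le_of_dvd (by positivity) hdv)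
    generalize (p : ℤ) ^ (m + 1) = Q at *
    generalize (hammingNorm (phi f (a, b, c)) : ℤ) = W at *
    generalize ε * qchar (ZMod p) (-1) ^ _ = σ at *
    obtain ⟨r, hr, hW⟩ : ∃ r : ℤ, (r = 0 ∨ r = 1 ∨ r = -1) ∧ W = Q * (Q * (p - 1) - r) := by
      refine ⟨s * quadraticChar (ZMod p) (a * (c + a * fstar (-(a⁻¹ • b)))) * σ, ?_, ?_⟩
      · rcases quadraticChar_isQuadratic (ZMod p) (a * (c + a * fstar (-(a⁻¹ • b)))) with h | h | h <;>
        rw [h] <;> rcases hs with rfl | rfl <;> rcases hs1 with rfl | rfl <;> simp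
      · rw [h]; ring
    generalize (p : ℤ) = P at *
    have hr1 : r ≤ 1 := by omega
    have hr2 : -1 ≤ r := by omega
    refine ⟨?_, ?_, ?_, ?_⟩
    · rw [hW]; apply mul_pos (by linarith); nlinarith
    · intro _; rw [hW]; nlinarith
    · intro _; rw [hW]; exact Dvd.dvd.mul_right hdv _
    · rintro ⟨h2e, -⟩; omega

theorem phi_inj (hodd : Odd p) (he : 2 ≤ e) (hc : Fintype.card Fq = p ^ e)
    {f : Fq → ZMod p} {ε : ℤ} {fstar : Fq → ZMod p} (hRF : IsRF p e Fq f ε fstar) :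
    Function.Injective (phi f) := by
  have hp3 := three_le hodd
  rw [injective_iff_map_eq_zero]
  rintro ⟨a, b, c⟩ h
  have hn : hammingNorm (phi f (a, b, c)) = 0 := by rw [h]; simp
  by_cases ha : a = 0
  · subst ha
    by_cases hb : b = 0
    · subst hb
      have h1 := wt_const hc f c
      by_cases h0 : c = 0
      · subst h0; rfl
      · rw [if_neg h0, hn] at h1
        have : (0 : ℤ) < (p : ℤ) ^ e := by positivity
        simp at h1; omega
    · have h1 := wt_lin (by omega) hc f b hb c
      have : p ^ (e - 1) < p ^ e := Nat.pow_lt_pow_right (by omega) (by omega)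
      rw [hn] at h1
      zify at this
      simp at h1
      omega
  · have := (wt_bounds hodd he hc hRF a ha b c).1
    omega

theorem code_eq (f : Fq → ZMod p) : rfCode p Fq f = Set.range (phi f) := by
  ext w
  constructor
  · rintro ⟨a, c, b, h⟩
    exact ⟨(a, b, c), funext fun x => (h x).symm⟩
  · rintro ⟨⟨a, b, c⟩, rfl⟩
    exact ⟨a, c, b, fun x => rfl⟩

theorem card_dom (hc : Fintype.card Fq = p ^ e) :
    Fintype.card (ZMod p × Fq × ZMod p) = p ^ (e + 2) := by
  rw [Fintype.card_prod, Fintype.card_prod, hc, ZMod.card]; ring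

theorem code_multiset {f : Fq → ZMod p} (hinj : Function.Injective (phi f))
    (C : Set (Fq → ZMod p)) [Fintype C] (hC : C = Set.range (phi f)) :
    (C.toFinset.val.map fun c => (hammingNorm c : ℤ)) =
      ∑ a : ZMod p, ∑ b : Fq, ∑ c : ZMod p, {(hammingNorm (phi f (a, b, c)) : ℤ)} := by
  have h1 : C.toFinset = Finset.univ.map ⟨phi f, hinj⟩ := by
    ext w; subst hC; simp
  rw [h1, Finset.map_val, Multiset.map_map]
  have : ∀ (s : Finset (ZMod p × Fq × ZMod p)) (F : (ZMod p × Fq × ZMod p) → ℤ), s.val.map F = ∑ x ∈ s, {F x} := by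
    intro s F
    rw [Finset.sum, ← Multiset.sum_map_singleton (s.val.map F), Multiset.map_map]
    rfl
  rw [this, Fintype.sum_prod_type]
  refine Finset.sum_congr rfl fun a _ => ?_
  rw [Fintype.sum_prod_type]
  rfl
end
section
variable {p e : ℕ} [Fact p.Prime] {Fq : Type} [Field Fq] [Fintype Fq] [Algebra (ZMod p) Fq]

theorem mult_zero (he : 2 ≤ e) (hc : Fintype.card Fq = p ^ e) (f : Fq → ZMod p) :
    ∑ b : Fq, ∑ c : ZMod p, ({(hammingNorm (phi f (0, b, c)) : ℤ)} : Multiset ℤ) =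
      {0} + (p - 1) • {(p : ℤ) ^ e} + (p * (p ^ e - 1)) • {(p : ℤ) ^ e - (p : ℤ) ^ (e - 1)} := by
  rw [← Finset.add_sum_erase _ _ (Finset.mem_univ (0 : Fq))]
  congr 1
  · simp only [wt_const hc]
    rw [← Finset.add_sum_erase _ _ (Finset.mem_univ (0 : ZMod p))]
    rw [Finset.sum_congr rfl (fun c hc => by rw [if_neg (Finset.ne_of_mem_erase hc)]), if_pos rfl,
      Finset.sum_const, Finset.card_erase_of_mem (Finset.mem_univ _), Finset.card_univ, ZMod.card]
  · rw [Finset.sum_congr rfl (fun b hb => by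
      rw [Finset.sum_congr rfl fun c _ => by rw [wt_lin (by omega) hc f b (Finset.ne_of_mem_erase hb) c]]),
      Finset.sum_const, Finset.sum_const, Finset.card_erase_of_mem (Finset.mem_univ _),
      Finset.card_univ, Finset.card_univ, ZMod.card, hc, smul_smul, mul_comm]

theorem mult_even (hodd : Odd p) (he : 2 ≤ e) (hev : Even e) (hc : Fintype.card Fq = p ^ e)
    {f : Fq → ZMod p} {ε : ℤ} {fstar : Fq → ZMod p} (hRF : IsRF p e Fq f ε fstar) (A B : ℤ)
    (hA : A = (p : ℤ) ^ e - (p : ℤ) ^ (e - 1)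
          - ε * qchar (ZMod p) (-1) ^ (e / 2) * ((p : ℤ) - 1) * (p : ℤ) ^ (e / 2 - 1))
    (hB : B = (p : ℤ) ^ e - (p : ℤ) ^ (e - 1)
          + ε * qchar (ZMod p) (-1) ^ (e / 2) * (p : ℤ) ^ (e / 2 - 1)) :
    ∑ a : ZMod p, ∑ b : Fq, ∑ c : ZMod p, ({(hammingNorm (phi f (a, b, c)) : ℤ)} : Multiset ℤ) =
     ({0} + (p - 1) • {(p : ℤ) ^ e} + (p * (p ^ e - 1)) • {(p : ℤ) ^ e - (p : ℤ) ^ (e - 1)}) +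
      (((p - 1) * p ^ e) • {A} + ((p - 1) ^ 2 * p ^ e) • {B}) := by
  rw [← Finset.add_sum_erase _ _ (Finset.mem_univ (0 : ZMod p)), mult_zero he hc]
  congr 1
  have key : ∀ a ∈ Finset.univ.erase (0 : ZMod p), ∑ b : Fq, ∑ c : ZMod p,
      ({(hammingNorm (phi f (a, b, c)) : ℤ)} : Multiset ℤ) = p ^ e • ({A} + (p - 1) • {B}) := by
    intro a ha
    have hb : ∀ b : Fq, ∑ c : ZMod p, ({(hammingNorm (phi f (a, b, c)) : ℤ)} : Multiset ℤ) =
        {A} + (p - 1) • {B} := by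
      intro b
      simp only [zeros_even hodd he hev hc hRF a (Finset.ne_of_mem_erase ha), ← hA, ← hB]
      refine (Fintype.sum_equiv (Equiv.addRight (a * fstar (-(a⁻¹ • b)))) _
        (fun t => {if t = 0 then A else B}) fun x => rfl).trans ?_
      rw [← Finset.add_sum_erase _ _ (Finset.mem_univ (0 : ZMod p)),
        Finset.sum_congr rfl (fun c hc => by rw [if_neg (Finset.ne_of_mem_erase hc)]), if_pos rfl,
        Finset.sum_const, Finset.card_erase_of_mem (Finset.mem_univ _), Finset.card_univ, ZMod.card]
    simp only [hb, Finset.sum_const, Finset.card_univ, hc]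
  rw [Finset.sum_congr rfl key, Finset.sum_const, Finset.card_erase_of_mem (Finset.mem_univ _),
    Finset.card_univ, ZMod.card]
  simp only [smul_add, smul_smul]
  congr 2
  ring

theorem sum_quad (hodd : Odd p) (v : ℤ → Multiset ℤ) :
    ∑ t : ZMod p, v (quadraticChar (ZMod p) t) = v 0 + ((p - 1) / 2) • (v 1 + v (-1)) := by
  have h0 := quadraticChar_sum_zero (ringChar_ne hodd)
  rw [← Finset.add_sum_erase _ _ (Finset.mem_univ (0 : ZMod p))] at h0 ⊢
  rw [quadraticChar_zero] at h0 ⊢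
  congr 1
  set S := Finset.univ.erase (0 : ZMod p) with hS
  have hcS : S.card = p - 1 := by
    rw [Finset.card_erase_of_mem (Finset.mem_univ _), Finset.card_univ, ZMod.card]
  have hne : ∀ t ∈ S.filter (fun t => ¬ quadraticChar (ZMod p) t = 1), quadraticChar (ZMod p) t = -1 := by
    intro t ht
    rw [Finset.mem_filter] at ht
    exact (quadraticChar_eq_neg_one_iff_not_one (Finset.ne_of_mem_erase ht.1)).mpr ht.2
  have hpos : ∀ t ∈ S.filter (fun t => quadraticChar (ZMod p) t = 1), quadraticChar (ZMod p) t = 1 :=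
    fun t ht => (Finset.mem_filter.mp ht).2
  have hcard := Finset.card_filter_add_card_filter_not (s := S) (fun t => quadraticChar (ZMod p) t = 1)
  rw [← Finset.sum_filter_add_sum_filter_not S (fun t => quadraticChar (ZMod p) t = 1),
    Finset.sum_congr rfl hpos, Finset.sum_congr rfl hne, Finset.sum_const, Finset.sum_const] at h0
  rw [← Finset.sum_filter_add_sum_filter_not S (fun t => quadraticChar (ZMod p) t = 1),
    Finset.sum_congr rfl (fun t ht => congrArg v (hpos t ht)),
    Finset.sum_congr rfl (fun t ht => congrArg v (hne t ht)), Finset.sum_const, Finset.sum_const, smul_add]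
  simp only [nsmul_eq_mul, mul_one, mul_neg] at h0
  rw [hcS] at hcard
  congr 2 <;> omega

theorem mult_odd (hodd : Odd p) (he : 2 ≤ e) (hev : Odd e) (hc : Fintype.card Fq = p ^ e)
    {f : Fq → ZMod p} {ε : ℤ} {fstar : Fq → ZMod p} (hRF : IsRF p e Fq f ε fstar) (D T : ℤ)
    (hD : D = (p : ℤ) ^ e - (p : ℤ) ^ (e - 1))
    (hT : T = ε * qchar (ZMod p) (-1) ^ ((e + 1) / 2) * (p : ℤ) ^ ((e - 1) / 2)) :
    ∑ a : ZMod p, ∑ b : Fq, ∑ c : ZMod p, ({(hammingNorm (phi f (a, b, c)) : ℤ)} : Multiset ℤ) =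
     ({0} + (p - 1) • {(p : ℤ) ^ e} + (p * (p ^ e - 1)) • {D}) +
      (((p - 1) * p ^ e) • {D} + ((p - 1) * p ^ e * ((p - 1) / 2)) • ({D - T} + {D + T})) := by
  obtain ⟨s, hs, hz⟩ := zeros_odd hodd he hev
  rw [← Finset.add_sum_erase _ _ (Finset.mem_univ (0 : ZMod p)), mult_zero he hc, hD]
  congr 1
  have key : ∀ a ∈ Finset.univ.erase (0 : ZMod p), ∑ b : Fq, ∑ c : ZMod p,
      ({(hammingNorm (phi f (a, b, c)) : ℤ)} : Multiset ℤ) =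
        p ^ e • ({D} + ((p - 1) / 2) • ({D - T} + {D + T})) := by
    intro a ha
    have ha0 := Finset.ne_of_mem_erase ha
    have hb : ∀ b : Fq, ∑ c : ZMod p, ({(hammingNorm (phi f (a, b, c)) : ℤ)} : Multiset ℤ) =
        {D} + ((p - 1) / 2) • ({D - T} + {D + T}) := by
      intro b
      simp only [hz hc hRF a ha0, ← hD, ← hT]
      refine (Fintype.sum_equiv ((Equiv.addRight (a * fstar (-(a⁻¹ • b)))).trans
        (Equiv.mulLeft₀ a ha0)) _
        (fun t => {D - s * quadraticChar (ZMod p) t * T}) fun x => rfl).trans ?_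
      rw [sum_quad hodd (fun u => {D - s * u * T})]
      rcases hs with rfl | rfl
      · simp
      · simp [add_comm ({D + T} : Multiset ℤ)]
    simp only [hb, Finset.sum_const, Finset.card_univ, hc]
  rw [Finset.sum_congr rfl key, Finset.sum_const, Finset.card_erase_of_mem (Finset.mem_univ _),
    Finset.card_univ, ZMod.card, hD]
  simp only [smul_add, smul_smul, mul_assoc]

end
section
variable {p e : ℕ} [Fact p.Prime] {Fq : Type} [Field Fq] [Fintype Fq] [Algebra (ZMod p) Fq]

theorem wt_dvd (hodd : Odd p) (he : 3 ≤ e) (hc : Fintype.card Fq = p ^ e)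
    {f : Fq → ZMod p} {ε : ℤ} {fstar : Fq → ZMod p} (hRF : IsRF p e Fq f ε fstar)
    (v : ZMod p × Fq × ZMod p) : p ∣ hammingNorm (phi f v) := by
  obtain ⟨a, b, c⟩ := v
  by_cases ha : a = 0
  · subst ha
    rw [← Int.natCast_dvd_natCast]
    by_cases hb : b = 0
    · subst hb
      rw [wt_const hc]
      split_ifs
      · simp
      · exact dvd_pow_self _ (by omega)
    · rw [wt_lin (by omega) hc f b hb]
      exact dvd_sub (dvd_pow_self _ (by omega)) (dvd_pow_self _ (by omega))
  · exact (wt_bounds hodd (by omega) hc hRF a ha b c).2.2.1 he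

theorem self_sq (hodd : Odd p) (he : 3 ≤ e) (hc : Fintype.card Fq = p ^ e)
    {f : Fq → ZMod p} {ε : ℤ} {fstar : Fq → ZMod p} (hRF : IsRF p e Fq f ε fstar)
    (v : ZMod p × Fq × ZMod p) : ∑ x, phi f v x * phi f v x = 0 := by
  rw [← Finset.sum_fiberwise Finset.univ (phi f v)]
  refine Finset.sum_eq_zero fun t _ => ?_
  rw [Finset.sum_congr rfl (g := fun _ => t * t)
    (fun x hx => by rw [(Finset.mem_filter.mp hx).2]), Finset.sum_const, nsmul_eq_mul]
  have h1 := norm_add_zeros (phi f (v - (0, 0, t)))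
  have h2 := wt_dvd hodd he hc hRF (v - (0, 0, t))
  have h3 : ∀ x, phi f (v - (0, 0, t)) x = phi f v x - t := by
    intro x
    rw [map_sub, Pi.sub_apply, phi_apply f 0 t 0 x]
    simp
  simp only [h3, sub_eq_zero] at h1
  have h4 : p ∣ (Finset.univ.filter fun x => phi f v x = t).card := by
    rw [← Nat.dvd_add_right h2, h1, hc]
    exact dvd_pow_self _ (by omega)
  rw [(ZMod.natCast_eq_zero_iff _ _).mpr h4, zero_mul]

theorem self_orth (hodd : Odd p) (he : 3 ≤ e) (hc : Fintype.card Fq = p ^ e)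
    {f : Fq → ZMod p} {ε : ℤ} {fstar : Fq → ZMod p} (hRF : IsRF p e Fq f ε fstar) :
    Set.range (phi f) ⊆ dualCode (Set.range (phi f)) := by
  rintro _ ⟨u, rfl⟩ _ ⟨v, rfl⟩
  have h1 := self_sq hodd he hc hRF u
  have h2 := self_sq hodd he hc hRF v
  have h3 := self_sq hodd he hc hRF (u + v)
  have h4 : ∑ x, phi f (u + v) x * phi f (u + v) x = ∑ x, phi f u x * phi f u x +
      ∑ x, phi f v x * phi f v x + 2 * ∑ x, phi f u x * phi f v x := by
    rw [Finset.mul_sum, ← Finset.sum_add_distrib, ← Finset.sum_add_distrib]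
    refine Finset.sum_congr rfl fun x _ => ?_
    rw [map_add, Pi.add_apply]
    ring
  rw [h1, h2, h3, zero_add, zero_add] at h4
  have h20 : (2 : ZMod p) ≠ 0 := Ring.two_ne_zero (ringChar_ne hodd)
  exact (mul_eq_zero.mp h4.symm).resolve_left h20

theorem dual_card (hc : Fintype.card Fq = p ^ e) {f : Fq → ZMod p}
    (hinj : Function.Injective (phi f)) :
    Nat.card (dualCode (Set.range (phi f))) = p ^ (p ^ e - e - 2) := by
  let B : LinearMap.BilinForm (ZMod p) (Fq → ZMod p) := dotProductBilin (ZMod p) (ZMod p)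
  have hB : ∀ u v, B u v = ∑ i, u i * v i := fun u v => rfl
  have hnd : B.Nondegenerate := by
    constructor
    · intro u hu
      funext i
      have := hu (Pi.single i 1)
      simpa [hB, Pi.single_apply] using this
    · intro u hu
      funext i
      have := hu (Pi.single i 1)
      simpa [hB, Pi.single_apply] using this
  have h1 := LinearMap.BilinForm.finrank_orthogonal hnd (LinearMap.range (phi f))
  have h2 : (dualCode (Set.range (phi f))) = (B.orthogonal (LinearMap.range (phi f)) : Set _) := by
    ext u
    constructor
    · rintro h _ ⟨v, rfl⟩
      have := h _ ⟨v, rfl⟩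
      rw [hB, ← this]
      exact Finset.sum_congr rfl fun x _ => mul_comm _ _
    · rintro h _ ⟨v, rfl⟩
      have : B (phi f v) u = 0 := h (phi f v) ⟨v, rfl⟩
      rw [hB] at this
      rw [← this]
      exact Finset.sum_congr rfl fun x _ => mul_comm _ _
  have h3 : Module.finrank (ZMod p) (LinearMap.range (phi f)) = e + 2 := by
    rw [LinearMap.finrank_range_of_inj hinj]
    have := Module.card_eq_pow_finrank (K := ZMod p) (V := ZMod p × Fq × ZMod p)
    rw [card_dom hc, ZMod.card] at this
    exact (Nat.pow_right_injective (Fact.out : p.Prime).two_le this).symm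
  rw [h3, Module.finrank_pi, hc] at h1
  have h4 := Module.natCard_eq_pow_finrank (K := ZMod p) (V := B.orthogonal (LinearMap.range (phi f)))
  rw [h1, Nat.card_zmod, ← Nat.sub_sub] at h4
  rw [h2]
  exact h4

theorem sum_supp (u : Fq → ZMod p) (g : Fq → ZMod p) :
    ∑ x, u x * g x = ∑ x ∈ Finset.univ.filter (fun x => u x ≠ 0), u x * g x := by
  rw [Finset.sum_filter_of_ne]
  intro x _ h h0
  rw [h0, zero_mul] at h
  exact h rfl

theorem three_le_norm (f : Fq → ZMod p) (u : Fq → ZMod p)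
    (hu : u ∈ dualCode (Set.range (phi f))) (h0 : u ≠ 0) : 3 ≤ hammingNorm u := by
  by_contra hlt
  have hS : hammingNorm u = (Finset.univ.filter (fun x => u x ≠ 0)).card := rfl
  have hpos := hammingNorm_pos_iff.mpr h0
  have h1 : ∀ v, ∑ x ∈ Finset.univ.filter (fun x => u x ≠ 0), u x * phi f v x = 0 := by
    intro v
    rw [← sum_supp]
    exact hu _ ⟨v, rfl⟩
  have h12 : hammingNorm u = 1 ∨ hammingNorm u = 2 := by omega
  have hmem : ∀ z, z ∈ Finset.univ.filter (fun x => u x ≠ 0) → u z ≠ 0 :=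
    fun z hz => (Finset.mem_filter.mp hz).2
  rcases h12 with h | h <;> rw [hS] at h
  · obtain ⟨x, hx⟩ := Finset.card_eq_one.mp h
    rw [hx] at h1 hmem
    have := h1 (0, 0, 1)
    simp [phi_apply] at this
    exact hmem x (by simp) this
  · obtain ⟨x, y, hxy, hx⟩ := Finset.card_eq_two.mp h
    rw [hx] at h1 hmem
    simp only [Finset.sum_pair hxy] at h1
    obtain ⟨b, hb⟩ := trace_ne (p := p) (x - y) (sub_ne_zero.mpr hxy)
    have h2 := h1 (0, 0, 1)
    have h3 := h1 (0, b, 0)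
    simp [phi_apply] at h2 h3
    have h4 : u x * Algebra.trace (ZMod p) Fq ((x - y) * b) = 0 := by
      rw [sub_mul, map_sub, mul_comm x b, mul_comm y b]
      linear_combination h3 - (Algebra.trace (ZMod p) Fq (b * y)) * h2
    exact mul_ne_zero (hmem x (by simp)) hb h4

theorem exists_three (hodd : Odd p) (he : 2 ≤ e) (hc : Fintype.card Fq = p ^ e)
    {f : Fq → ZMod p} {ε : ℤ} {fstar : Fq → ZMod p} (hRF : IsRF p e Fq f ε fstar)
    (hn : ¬(e = 2 ∧ ε * qchar (ZMod p) (-1) = -1)) :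
    ∃ u ∈ dualCode (Set.range (phi f)), u ≠ 0 ∧ hammingNorm u = 3 := by
  have h20 : (2 : ZMod p) ≠ 0 := Ring.two_ne_zero (ringChar_ne hodd)
  have h1 := (wt_bounds hodd he hc hRF 1 one_ne_zero 0 0).2.1 hn
  have h2 := norm_add_zeros (phi f (1, 0, 0))
  have h3 : 1 < (Finset.univ.filter fun x => phi f (1, 0, 0) x = 0).card := by omega
  obtain ⟨d, hd, hd0⟩ := Finset.exists_mem_ne h3 0
  have hfd : f d = 0 := by
    have := (Finset.mem_filter.mp hd).2
    simpa [phi_apply] using this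
  have hfd' : f (-d) = 0 := by
    obtain ⟨h, hev, -, -, hh⟩ := hRF.hom
    have := hh (-1) (neg_ne_zero.mpr one_ne_zero) d
    simpa [hfd] using this
  have hf0 := hRF.map_zero
  have hdd : d ≠ -d := by
    intro h
    have h5 : (2 : Fq) * d = 0 := by linear_combination h
    have h6 : (2 : Fq) ≠ 0 := by
      have := (map_ne_zero (algebraMap (ZMod p) Fq)).mpr h20
      rwa [map_ofNat] at this
    exact (mul_ne_zero h6 hd0) h5
  let u : Fq → ZMod p := fun x => if x = 0 then -2 else if x = d ∨ x = -d then 1 else 0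
  have hsupp : Finset.univ.filter (fun x => u x ≠ 0) = {0, d, -d} := by
    ext x
    simp only [u, Finset.mem_filter, Finset.mem_univ, true_and, Finset.mem_insert,
      Finset.mem_singleton]
    by_cases hx0 : x = 0
    · simp [hx0, h20]
    · by_cases hx : x = d ∨ x = -d <;> simp [hx0, hx]
  have hm1 : (0 : Fq) ∉ ({d, -d} : Finset Fq) := by
    simp [eq_comm, hd0]
  have hnorm : hammingNorm u = 3 := by
    have : hammingNorm u = (Finset.univ.filter (fun x => u x ≠ 0)).card := rfl
    rw [this, hsupp, Finset.card_insert_of_notMem hm1, Finset.card_pair hdd]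
  refine ⟨u, ?_, ?_, hnorm⟩
  · rintro _ ⟨⟨a, b, c⟩, rfl⟩
    rw [sum_supp, hsupp, Finset.sum_insert hm1, Finset.sum_pair hdd]
    simp [u, phi_apply, hfd, hfd', hf0, hd0]
    ring
  · intro h
    rw [h] at hnorm
    simp at hnorm

theorem ker_ineq {V B : Type*} [AddCommGroup V] [Fintype V] [AddCommGroup B] [Fintype B]
    (D : AddSubgroup V) (g : V →+ B) :
    (Finset.univ.filter fun v => v ∈ D).card ≤
      (Finset.univ.filter fun v => v ∈ D ∧ g v = 0).card * Fintype.card B := by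
  rw [← Finset.card_univ (α := B)]
  refine Finset.card_le_mul_card_image_of_maps_to (f := g) (fun _ _ => Finset.mem_univ _) _ ?_
  intro b _
  rcases Finset.eq_empty_or_nonempty ((Finset.univ.filter fun v => v ∈ D).filter fun v => g v = b)
    with h | ⟨v0, hv0⟩
  · rw [h]; simp
  · simp only [Finset.mem_filter, Finset.mem_univ, true_and] at hv0
    refine Finset.card_le_card_of_injOn (fun v => v - v0) ?_ (sub_left_injective.injOn)
    intro v hv
    simp only [Finset.coe_filter, Finset.mem_filter, Finset.mem_univ, true_and, Set.mem_ofPred_eq] at hv ⊢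
    exact ⟨D.sub_mem hv.1 hv0.1, by rw [map_sub, hv.2, hv0.2, sub_self]⟩

theorem zeros_le (hodd : Odd p) (hc : Fintype.card Fq = p ^ 2)
    {f : Fq → ZMod p} {ε : ℤ} {fstar : Fq → ZMod p} (hRF : IsRF p 2 Fq f ε fstar)
    (hn : ε * qchar (ZMod p) (-1) = -1) (v : ZMod p × Fq × ZMod p) (hv : v ≠ 0) :
    (Finset.univ.filter fun x => phi f v x = 0).card ≤ p + 1 := by
  have h2 := norm_add_zeros (phi f v)
  rw [hc] at h2
  suffices p ^ 2 ≤ hammingNorm (phi f v) + p + 1 by omega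
  obtain ⟨a, b, c⟩ := v
  by_cases ha : a = 0
  · subst ha
    by_cases hb : b = 0
    · subst hb
      have h := wt_const hc f c
      rw [if_neg (by rintro rfl; exact hv rfl)] at h
      zify
      omega
    · have h := wt_lin (by omega) hc f b hb c
      rw [Nat.add_one_sub_one, pow_one] at h
      zify
      omega
  · exact (wt_bounds hodd le_rfl hc hRF a ha b c).2.2.2 ⟨rfl, hn⟩

theorem four_le_norm (hodd : Odd p) (hc : Fintype.card Fq = p ^ 2)
    {f : Fq → ZMod p} {ε : ℤ} {fstar : Fq → ZMod p} (hRF : IsRF p 2 Fq f ε fstar)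
    (hn : ε * qchar (ZMod p) (-1) = -1) (u : Fq → ZMod p)
    (hu : u ∈ dualCode (Set.range (phi f))) (h0 : u ≠ 0) : 4 ≤ hammingNorm u := by
  have h3 := three_le_norm f u hu h0
  by_contra hlt
  have hS : hammingNorm u = (Finset.univ.filter (fun x => u x ≠ 0)).card := rfl
  have h33 : (Finset.univ.filter (fun x => u x ≠ 0)).card = 3 := by omega
  have h1 : ∀ v, ∑ x ∈ Finset.univ.filter (fun x => u x ≠ 0), u x * phi f v x = 0 := by
    intro v
    rw [← sum_supp]
    exact hu _ ⟨v, rfl⟩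
  have hmem : ∀ z, z ∈ Finset.univ.filter (fun x => u x ≠ 0) → u z ≠ 0 :=
    fun z hz => (Finset.mem_filter.mp hz).2
  set S := Finset.univ.filter (fun x => u x ≠ 0) with hSdef
  obtain ⟨x, y, z, hxy, hxz, hyz, hx⟩ := Finset.card_eq_three.mp h33
  have hsum : ∀ v, u x * phi f v x + (u y * phi f v y + u z * phi f v z) = 0 := by
    intro v
    have := h1 v
    rw [hx, Finset.sum_insert (by simp [hxy, hxz]), Finset.sum_pair hyz] at this
    exact this
  have huz : u z ≠ 0 := hmem z (by rw [hx]; simp)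
  let ev : Fq → (ZMod p × Fq × ZMod p) →+ ZMod p := fun t =>
    (Pi.evalAddMonoidHom (fun _ : Fq => ZMod p) t).comp (phi f).toAddMonoidHom
  have hev : ∀ t v, ev t v = phi f v t := fun _ _ => rfl
  let g := (ev x).prod (ev y)
  let D : AddSubgroup (ZMod p × Fq × ZMod p) := g.ker
  have hD : ∀ v, v ∈ D ↔ phi f v x = 0 ∧ phi f v y = 0 := by
    intro v
    simp [D, g, AddMonoidHom.mem_ker, Prod.ext_iff, hev]
  have hDS : ∀ t ∈ S, ∀ v ∈ D, phi f v t = 0 := by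
    intro t ht v hv
    rw [hx] at ht
    have hv' := (hD v).mp hv
    simp only [Finset.mem_insert, Finset.mem_singleton] at ht
    rcases ht with rfl | rfl | rfl
    · exact hv'.1
    · exact hv'.2
    · have := hsum v
      rw [hv'.1, hv'.2] at this
      simpa [huz] using this
  set DD := Finset.univ.filter fun v => v ∈ D with hDD
  have hK : p ^ 2 ≤ DD.card := by
    have h := ker_ineq (⊤ : AddSubgroup (ZMod p × Fq × ZMod p)) g
    simp only [AddSubgroup.mem_top, Finset.filter_true, true_and, Finset.card_univ, card_dom hc,
      Fintype.card_prod, ZMod.card] at h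
    have e1 : (Finset.univ.filter fun v => g v = 0) = DD := by
      ext v; simp [hDD, D, AddMonoidHom.mem_ker]
    have h' : p ^ (2 + 2) ≤ DD.card * (p * p) := by
      rw [← e1]
      exact h
    have hpp : 0 < p * p := Nat.mul_pos (Fact.out : p.Prime).pos (Fact.out : p.Prime).pos
    refine Nat.le_of_mul_le_mul_right ?_ hpp
    calc p ^ 2 * (p * p) = p ^ (2 + 2) := by ring
      _ ≤ _ := h'
  have hcount : ∑ v ∈ DD, (Finset.univ.filter fun t => phi f v t = 0).card =
      ∑ t : Fq, (DD.filter fun v => phi f v t = 0).card :=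
    Finset.sum_card_bipartiteAbove_eq_sum_card_bipartiteBelow (s := DD) (t := Finset.univ)
      (fun v t => phi f v t = 0)
  have hup : ∑ v ∈ DD, (Finset.univ.filter fun t => phi f v t = 0).card ≤
      p ^ 2 + (DD.card - 1) * (p + 1) := by
    have h0D : (0 : ZMod p × Fq × ZMod p) ∈ DD := by simp [hDD, D.zero_mem]
    rw [← Finset.add_sum_erase _ _ h0D]
    apply add_le_add
    · rw [← hc]; exact Finset.card_le_univ _
    · rw [← Finset.card_erase_of_mem h0D, ← smul_eq_mul]
      exact Finset.sum_le_card_nsmul _ _ _ fun v hv =>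
        zeros_le hodd hc hRF hn v (Finset.ne_of_mem_erase hv)
  have hlow1 : ∀ t, DD.card ≤ (DD.filter fun v => phi f v t = 0).card * p := by
    intro t
    have := ker_ineq D (ev t)
    rw [ZMod.card] at this
    rw [hDD, Finset.filter_filter]
    refine le_trans (Finset.card_le_card fun v hv => ?_) (this.trans
      (Nat.mul_le_mul_right _ (Finset.card_le_card fun v hv => ?_)))
    · simpa only [Finset.mem_filter] using hv
    · simp only [Finset.mem_filter, hev] at hv ⊢
      exact hv
  have hlow2 : ∀ t ∈ S, (DD.filter fun v => phi f v t = 0).card = DD.card := by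
    intro t ht
    rw [Finset.filter_true_of_mem]
    intro v hv
    exact hDS t ht v (Finset.mem_filter.mp hv).2
  have hlow : 3 * DD.card * p + (p ^ 2 - 3) * DD.card ≤
      (∑ t : Fq, (DD.filter fun v => phi f v t = 0).card) * p := by
    rw [← Finset.sum_add_sum_compl S, add_mul]
    apply add_le_add
    · rw [Finset.sum_congr rfl hlow2, Finset.sum_const, h33, smul_eq_mul]
    · rw [Finset.sum_mul, ← hc, ← h33, ← Finset.card_compl, ← smul_eq_mul]
      exact Finset.card_nsmul_le_sum _ _ _ fun t _ => hlow1 t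
  rw [← hcount] at hlow
  have hfin := hlow.trans (Nat.mul_le_mul_right p hup)
  have hp3 := three_le hodd
  generalize DD.card = K at *
  have hp2 : 3 ≤ p ^ 2 := by nlinarith
  have hK1 : 1 ≤ K := by omega
  zify [hp2, hK1] at hfin hK hp3
  generalize (K : ℤ) = k at *
  generalize (p : ℤ) = P at *
  have h7 : k * (2 * P - 3) ≤ P ^ 3 - P ^ 2 - P := by nlinarith
  have h8 : P ^ 2 * (2 * P - 3) ≤ k * (2 * P - 3) := mul_le_mul_of_nonneg_right hK (by linarith)
  nlinarith [mul_pos (show 0 < P by linarith) (show 0 < (P - 1) ^ 2 by nlinarith)]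

theorem exists_four (hodd : Odd p) (hc : Fintype.card Fq = p ^ 2)
    {f : Fq → ZMod p} {ε : ℤ} {fstar : Fq → ZMod p} (hRF : IsRF p 2 Fq f ε fstar)
    (hn : ε * qchar (ZMod p) (-1) = -1) :
    ∃ u ∈ dualCode (Set.range (phi f)), u ≠ 0 ∧ hammingNorm u = 4 := by
  have hp3 := three_le hodd
  obtain ⟨c, hcc⟩ : ∃ c : ZMod p, c + 1 * fstar (-((1 : ZMod p)⁻¹ • (0 : Fq))) ≠ 0 :=
    ⟨1 - 1 * fstar (-((1 : ZMod p)⁻¹ • (0 : Fq))), by simp⟩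
  have h1 := zeros_even hodd le_rfl even_two hc hRF 1 one_ne_zero 0 c
  rw [if_neg hcc] at h1
  simp only [Nat.div_self two_pos, pow_one, hn, Nat.sub_self, pow_zero, Nat.add_one_sub_one] at h1
  have h2 := norm_add_zeros (phi f (1, 0, c))
  rw [hc] at h2
  have h3 : 4 ≤ (Finset.univ.filter fun x => phi f (1, 0, c) x = 0).card := by
    zify at h2 hp3 ⊢
    linarith
  obtain ⟨T, hT, hT4⟩ := Finset.exists_subset_card_eq h3
  let R : (ZMod p × Fq × ZMod p) →ₗ[ZMod p] (T → ZMod p) :=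
    (LinearMap.funLeft (ZMod p) (ZMod p) (fun t : T => (t : Fq))).comp (phi f)
  have hR : ∀ v t, R v t = phi f v t := fun _ _ => rfl
  have hRinj : ¬ Function.Injective R := by
    intro hinj
    have : (1, 0, c) = (0 : ZMod p × Fq × ZMod p) := by
      apply hinj
      rw [map_zero]
      funext t
      exact (Finset.mem_filter.mp (hT t.2)).2
    exact one_ne_zero (congrArg Prod.fst this)
  have hRsurj : ¬ Function.Surjective R := by
    intro hs
    apply hRinj
    refine ((Fintype.bijective_iff_surjective_and_card R).mpr ⟨hs, ?_⟩).1
    rw [card_dom hc, Fintype.card_fun, ZMod.card, Fintype.card_coe, hT4]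
  have hlt : LinearMap.range R < ⊤ := lt_top_iff_ne_top.mpr fun h => hRsurj (LinearMap.range_eq_top.mp h)
  obtain ⟨g, hg0, hg⟩ := Submodule.exists_le_ker_of_lt_top _ hlt
  have hgs : ∀ w : T → ZMod p, g w = ∑ t, g (Pi.single t 1) * w t := by
    intro w
    conv_lhs => rw [LinearMap.pi_apply_eq_sum_univ g w]
    refine Finset.sum_congr rfl fun t _ => ?_
    rw [smul_eq_mul, mul_comm]
    congr 2
    funext j
    simp [Pi.single_apply, eq_comm]
  let u : Fq → ZMod p := fun x => if h : x ∈ T then g (Pi.single ⟨x, h⟩ 1) else 0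
  have huT : ∀ t : T, u t = g (Pi.single t 1) := by
    intro t; simp [u]
  have hu : u ∈ dualCode (Set.range (phi f)) := by
    rintro _ ⟨v, rfl⟩
    have h5 : g (R v) = 0 := hg ⟨v, rfl⟩
    rw [hgs] at h5
    rw [← h5, ← Finset.sum_subset (Finset.subset_univ T), ← Finset.sum_coe_sort T]
    · exact Finset.sum_congr rfl fun t _ => by rw [huT, hR]
    · intro x _ hx
      simp [u, hx]
  have hu0 : u ≠ 0 := by
    intro h
    apply hg0
    ext1 t
    ext
    simp [← huT, h]
  refine ⟨u, hu, hu0, le_antisymm ?_ (four_le_norm hodd hc hRF hn u hu hu0)⟩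
  rw [← hT4]
  refine Finset.card_le_card fun x hx => ?_
  by_contra hxT
  exact (Finset.mem_filter.mp hx).2 (by simp [u, hxT])

end

end RF

theorem stmt15 (p e q : ℕ) [Fact p.Prime] (hodd : Odd p) (he : 2 ≤ e) (hq : q = p ^ e)
    (Fq : Type) [Field Fq] [Fintype Fq] [Algebra (ZMod p) Fq]
    (hcq : Fintype.card Fq = q)
    (f : Fq → ZMod p) (ε : ℤ) (fstar : Fq → ZMod p) (hRF : IsRF p e Fq f ε fstar)
    (C : Set (Fq → ZMod p)) (hC : C = rfCode p Fq f) :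
    -- length `p^e`
    Fintype.card Fq = p ^ e ∧
    -- dimension `e + 2`
    Nat.card C = p ^ (e + 2) ∧
    -- weight distribution, `e` even, with `σ = ε η₀(-1)^{e/2}`
    (Even e →
      (C.toFinset.val.map fun c => (hammingNorm c : ℤ))
        = Multiset.replicate 1 (0 : ℤ)
          + Multiset.replicate ((p - 1) * p ^ e)
              ((p : ℤ) ^ e - (p : ℤ) ^ (e - 1)
                - ε * qchar (ZMod p) (-1) ^ (e / 2) * ((p : ℤ) - 1) * (p : ℤ) ^ (e / 2 - 1))
          + Multiset.replicate ((p - 1) ^ 2 * p ^ e)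
              ((p : ℤ) ^ e - (p : ℤ) ^ (e - 1)
                + ε * qchar (ZMod p) (-1) ^ (e / 2) * (p : ℤ) ^ (e / 2 - 1))
          + Multiset.replicate (p * (p ^ e - 1)) ((p : ℤ) ^ e - (p : ℤ) ^ (e - 1))
          + Multiset.replicate (p - 1) ((p : ℤ) ^ e)) ∧
    -- weight distribution, `e` odd, with `τ = ε η₀(-1)^{(e+1)/2}`
    (Odd e →
      (C.toFinset.val.map fun c => (hammingNorm c : ℤ))
        = Multiset.replicate 1 (0 : ℤ)
          + Multiset.replicate ((p - 1) ^ 2 * p ^ e / 2)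
              ((p : ℤ) ^ e - (p : ℤ) ^ (e - 1)
                - ε * qchar (ZMod p) (-1) ^ ((e + 1) / 2) * (p : ℤ) ^ ((e - 1) / 2))
          + Multiset.replicate ((p - 1) ^ 2 * p ^ e / 2)
              ((p : ℤ) ^ e - (p : ℤ) ^ (e - 1)
                + ε * qchar (ZMod p) (-1) ^ ((e + 1) / 2) * (p : ℤ) ^ ((e - 1) / 2))
          + Multiset.replicate (2 * p ^ (e + 1) - p ^ e - p)
              ((p : ℤ) ^ e - (p : ℤ) ^ (e - 1))
          + Multiset.replicate (p - 1) ((p : ℤ) ^ e)) ∧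
    -- self-orthogonality for `e ≥ 3`
    (3 ≤ e → C ⊆ dualCode C) ∧
    -- the dual code has dimension `p^e - e - 2`
    Nat.card (dualCode C) = p ^ (p ^ e - e - 2) ∧
    -- minimum distance of the dual code
    (e = 2 ∧ ε * qchar (ZMod p) (-1) = -1 → IsMinDist (dualCode C) 4) ∧
    (¬(e = 2 ∧ ε * qchar (ZMod p) (-1) = -1) → IsMinDist (dualCode C) 3) := by
  subst hq
  have hC' : C = Set.range (RF.phi f) := hC.trans (RF.code_eq f)
  clear hC
  have hinj := RF.phi_inj hodd he hcq hRF
  have hp3 := RF.three_le hodd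
  refine ⟨hcq, ?_, ?_, ?_, ?_, ?_, ?_, ?_⟩
  · rw [hC', Nat.card_range_of_injective hinj, Nat.card_eq_fintype_card, RF.card_dom hcq]
  · intro hev
    rw [RF.code_multiset hinj C hC', RF.mult_even hodd he hev hcq hRF _ _ rfl rfl]
    simp only [← Multiset.nsmul_singleton, one_smul]
    abel
  · intro hev
    rw [RF.code_multiset hinj C hC', RF.mult_odd hodd he hev hcq hRF _ _ rfl rfl]
    have e1 : (p - 1) ^ 2 * p ^ e / 2 = (p - 1) * p ^ e * ((p - 1) / 2) := by
      obtain ⟨k, rfl⟩ := hodd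
      have : (2 * k + 1 - 1) ^ 2 * (2 * k + 1) ^ e = 2 * ((2 * k) * (2 * k + 1) ^ e * k) := by
        rw [Nat.add_sub_cancel]; ring
      rw [this, Nat.mul_div_cancel_left _ two_pos, Nat.add_sub_cancel,
        Nat.mul_div_cancel_left _ two_pos]
    have e2 : 2 * p ^ (e + 1) - p ^ e - p = p * (p ^ e - 1) + (p - 1) * p ^ e := by
      have : 1 ≤ p ^ e := Nat.one_le_pow _ _ (by omega)
      rw [Nat.mul_sub, Nat.sub_mul, pow_succ, mul_comm p (p ^ e)]
      have h1 : p ≤ p ^ e * p := Nat.le_mul_of_pos_left _ this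
      have h2 : p ^ e ≤ p ^ e * p := Nat.le_mul_of_pos_right _ (by omega)
      omega
    rw [e1, e2]
    simp only [← Multiset.nsmul_singleton, one_smul, smul_add, add_smul]
    abel
  · intro h3
    rw [hC']
    exact RF.self_orth hodd h3 hcq hRF
  · rw [hC']
    exact RF.dual_card hcq hinj
  · rintro ⟨rfl, hn⟩
    rw [hC']
    obtain ⟨u, hu, hu0, hu4⟩ := RF.exists_four hodd hcq hRF hn
    refine ⟨⟨u, hu, hu0, by convert hu4⟩, fun c hc h0 => ?_⟩
    convert RF.four_le_norm hodd hcq hRF hn c hc h0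
  · intro hn
    rw [hC']
    obtain ⟨u, hu, hu0, hu3⟩ := RF.exists_three hodd he hcq hRF hn
    refine ⟨⟨u, hu, hu0, by convert hu3⟩, fun c hc h0 => ?_⟩
    convert RF.three_le_norm f c hc h0
end
end

section
/- Let q = p² (i.e., e = 2) and let f : F_q → F_p belong to the class RF with sign ε satisfying ε η_0(−1) = −1. Then C_f has length p², dimension 4 and minimum distance p² − p − 1, its weight enumerator is 1 + p²(p−1)² z^{p²−p−1} + p(p²−1) z^{p²−p} + p²(p−1) z^{p²−1} + (p−1) z^{p²}, and the dual code C_f^⊥ has length p², dimension p² − 4 and minimum distance 4. Moreover, the supports of the codewords of weight p² − p − 1 in C_f form a 2-(p², p² − p − 1, (p−2)(p² − p − 1)) design, the complements of these supports form a 2-(p², p + 1, p) design, and the supports of the codewords of weight 4 in C_f^⊥ form a 2-(p², 4, (p² − 3)(p − 2)/2) design. -/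
open scoped Classical

noncomputable section

/-- The supports of the codewords of `C` of Hamming weight `κ` form a
`2-(n, κ, lam)` design. -/
def Holds2Design {ι F : Type*} [Fintype ι] [CommRing F] (C : Set (ι → F))
    (κ lam : ℕ) : Prop :=
  ∀ i j : ι, i ≠ j →
    Nat.card {S : Set ι //
      (∃ c ∈ C, hammingNorm c = κ ∧ S = {k | c k ≠ 0}) ∧ i ∈ S ∧ j ∈ S} = lam

/-- The complements of the supports of the codewords of `C` of Hamming weight `κ`
form a 2-design with `lam` blocks through every pair of points. -/
def Holds2DesignCompl {ι F : Type*} [Fintype ι] [CommRing F] (C : Set (ι → F))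
    (κ lam : ℕ) : Prop :=
  ∀ i j : ι, i ≠ j →
    Nat.card {S : Set ι //
      (∃ c ∈ C, hammingNorm c = κ ∧ S = {k | c k = 0}) ∧ i ∈ S ∧ j ∈ S} = lam


set_option linter.unusedSectionVars false
set_option linter.unusedVariables false
set_option linter.style.longLine false

namespace RFaux

lemma coeff_eq (p : ℕ) [hp : Fact p.Prime] (c : ZMod p → ℚ)
    (h : ∑ t : ZMod p, (c t : ℂ) * zetapc p ^ t.val = 0) (s t : ZMod p) : c s = c t := by
  have hζ : IsPrimitiveRoot (zetapc p) p := Complex.isPrimitiveRoot_exp p hp.out.ne_zero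
  let P : Polynomial ℚ := ∑ t : ZMod p, Polynomial.C (c t) * Polynomial.X ^ t.val
  have hP : Polynomial.aeval (zetapc p) P = 0 := by
    simp only [P, map_sum, map_mul, Polynomial.aeval_C, map_pow, Polynomial.aeval_X]
    exact h
  have hdvd : Polynomial.cyclotomic p ℚ ∣ P := by
    rw [Polynomial.cyclotomic_eq_minpoly_rat hζ hp.out.pos]
    exact minpoly.dvd ℚ _ hP
  obtain ⟨Q, hQ⟩ := hdvd
  have hcoef : ∀ t : ZMod p, P.coeff t.val = c t := by
    intro t
    simp only [P, Polynomial.finsetSum_coeff, Polynomial.coeff_C_mul, Polynomial.coeff_X_pow]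
    rw [Finset.sum_eq_single t]
    · simp
    · intro b _ hb
      rw [if_neg, mul_zero]
      intro hh
      exact hb (ZMod.val_injective p hh.symm)
    · simp
  have hdeg : P.natDegree ≤ p - 1 := by
    apply Polynomial.natDegree_sum_le_of_forall_le
    intro i _
    refine (Polynomial.natDegree_C_mul_X_pow_le _ _).trans ?_
    have := ZMod.val_lt i
    omega
  have hQ0 : Q.natDegree = 0 := by
    by_cases hq : Q = 0
    · simp [hq]
    · have := Polynomial.natDegree_mul (Polynomial.cyclotomic_ne_zero p ℚ) hq
      rw [← hQ, Polynomial.natDegree_cyclotomic, Nat.totient_prime hp.out] at this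
      omega
  rw [Polynomial.eq_C_of_natDegree_eq_zero hQ0, Polynomial.cyclotomic_prime] at hQ
  have key : ∀ t : ZMod p, c t = Q.coeff 0 := by
    intro t
    rw [← hcoef t, hQ, Polynomial.coeff_mul_C, Polynomial.finsetSum_coeff]
    simp [Polynomial.coeff_X_pow, ZMod.val_lt t]
  rw [key, key]

lemma fiber_count (p : ℕ) [hp : Fact p.Prime] {X : Type} [Fintype X]
    (hcq : Fintype.card X = p ^ 2) (g : X → ZMod p) (s : ZMod p)
    (h : ∑ x : X, zetapc p ^ (g x).val = - (p : ℂ) * zetapc p ^ s.val) (t : ZMod p) :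
    (Finset.univ.filter fun x => g x = t).card = if t = s then 1 else p + 1 := by
  let n : ZMod p → ℕ := fun t => (Finset.univ.filter fun x => g x = t).card
  let c : ZMod p → ℚ := fun t => n t + if t = s then (p : ℚ) else 0
  have h1 : ∑ x : X, zetapc p ^ (g x).val = ∑ t : ZMod p, (n t : ℂ) * zetapc p ^ t.val := by
    rw [← Finset.sum_fiberwise (s := Finset.univ) (g := g)]
    refine Finset.sum_congr rfl fun t _ => ?_
    rw [Finset.sum_congr rfl (g := fun _ => zetapc p ^ t.val)]
    · simp [n]
    · intro x hx
      rw [(Finset.mem_filter.1 hx).2]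
  have h2 : ∑ t : ZMod p, (c t : ℂ) * zetapc p ^ t.val = 0 := by
    have : ∀ t : ZMod p, (c t : ℂ) * zetapc p ^ t.val
        = (n t : ℂ) * zetapc p ^ t.val + if t = s then (p : ℂ) * zetapc p ^ s.val else 0 := by
      intro t
      by_cases hts : t = s
      · simp [c, hts]; ring
      · simp [c, hts]
    simp only [this, Finset.sum_add_distrib, ← h1, h]
    simp
  have h3 := coeff_eq p c h2
  have hs : ∑ t : ZMod p, c t = p ^ 2 + p := by
    have : ∑ t : ZMod p, n t = p ^ 2 := by
      rw [← hcq, ← Finset.card_univ]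
      exact (Finset.card_eq_sum_card_fiberwise (f := g) (by simp)).symm
    simp only [c, Finset.sum_add_distrib]
    rw [← Nat.cast_sum, this]
    simp
  have h4 : ∀ t, c t = p + 1 := by
    intro t
    rw [Finset.sum_congr rfl (fun x _ => h3 x t)] at hs
    simp [ZMod.card] at hs
    have hp0 : (p : ℚ) ≠ 0 := by exact_mod_cast hp.out.ne_zero
    apply mul_left_cancel₀ hp0
    rw [hs]; ring
  have := h4 t
  simp only [c] at this
  by_cases hts : t = s
  · simp only [hts, if_true] at this ⊢
    have h5 : (n s : ℚ) = 1 := by linarith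
    exact_mod_cast h5
  · simp only [hts, if_false, add_zero] at this ⊢
    exact_mod_cast this

lemma sign_eq (p : ℕ) [hp : Fact p.Prime] (hodd : Odd p) (ε : ℤ)
    (hsign : ε * qchar (ZMod p) (-1) = -1) : (ε : ℂ) * sqrtpstar p ^ 2 = -(p : ℂ) := by
  have hsq : sqrtpstar p ^ 2 = (-1) ^ (((p - 1) / 2) ^ 2) * (p : ℂ) := by
    unfold sqrtpstar
    rw [mul_pow, ← pow_mul, mul_comm _ 2, pow_mul, Complex.I_sq, ← Complex.ofReal_pow,
      Real.sq_sqrt (Nat.cast_nonneg p)]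
    simp
  have hq : ((qchar (ZMod p) (-1) : ℤ) : ℂ) = (-1) ^ (((p - 1) / 2) ^ 2) := by
    unfold qchar
    rw [if_neg (by simp)]
    have hm : p % 4 = 1 ∨ p % 4 = 3 := by
      obtain ⟨k, hk⟩ := hodd; omega
    rcases hm with hm | hm
    · rw [if_pos (ZMod.exists_sq_eq_neg_one_iff.2 (by omega))]
      have : Even (((p - 1) / 2) ^ 2) := by
        have : Even ((p-1)/2) := by rw [Nat.even_iff]; omega
        exact this.pow_of_ne_zero (by norm_num)
      simp [this.neg_one_pow]
    · rw [if_neg (by rw [ZMod.exists_sq_eq_neg_one_iff]; omega)]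
      have : Odd (((p - 1) / 2) ^ 2) := by
        have : Odd ((p-1)/2) := by rw [Nat.odd_iff]; omega
        exact this.pow
      simp [this.neg_one_pow]
  rw [hsq, ← hq, ← mul_assoc, ← Int.cast_mul, hsign]
  simp

section
variable {p : ℕ} [hp : Fact p.Prime] {Fq : Type} [Field Fq] [Fintype Fq] [Algebra (ZMod p) Fq]

lemma trace_fiber (hcq : Fintype.card Fq = p ^ 2) (b : Fq) (hb : b ≠ 0) (t : ZMod p) :
    (Finset.univ.filter fun x : Fq => Algebra.trace (ZMod p) Fq (b * x) = t).card = p := by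
  let L : Fq →ₗ[ZMod p] ZMod p := (Algebra.trace (ZMod p) Fq).comp (LinearMap.mulLeft (ZMod p) b)
  have hL : Function.Surjective L := by
    intro t
    obtain ⟨y, hy⟩ := Algebra.trace_surjective (ZMod p) Fq t
    exact ⟨b⁻¹ * y, by simp [L, hb, hy]⟩
  have hc : ∀ t, (Finset.univ.filter fun x : Fq => L x = t).card
      = (Finset.univ.filter fun x : Fq => L x = 0).card := by
    intro t
    obtain ⟨y, hy⟩ := hL t
    refine Finset.card_bij' (fun x _ => x - y) (fun x _ => x + y) ?_ ?_ ?_ ?_ <;> simp +contextual [hy]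
  have hs : ∑ t : ZMod p, (Finset.univ.filter fun x : Fq => L x = t).card = p ^ 2 := by
    rw [← hcq, ← Finset.card_univ]
    exact (Finset.card_eq_sum_card_fiberwise (f := L) (by simp)).symm
  rw [Finset.sum_congr rfl (fun t _ => hc t)] at hs
  simp only [Finset.sum_const, Finset.card_univ, ZMod.card, smul_eq_mul, pow_two] at hs
  have := hc t
  rw [Nat.eq_of_mul_eq_mul_left hp.out.pos hs] at this
  exact this

/-- The codeword map. -/
def Phi (f : Fq → ZMod p) : (ZMod p × Fq × ZMod p) →ₗ[ZMod p] (Fq → ZMod p) where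
  toFun v x := v.1 * f x + Algebra.trace (ZMod p) Fq (v.2.1 * x) + v.2.2
  map_add' u v := by
    funext x
    simp [add_mul]; ring
  map_smul' a v := by
    funext x
    simp; ring

lemma Phi_apply (f : Fq → ZMod p) (a : ZMod p) (b : Fq) (c : ZMod p) (x : Fq) :
    Phi f (a, b, c) x = a * f x + Algebra.trace (ZMod p) Fq (b * x) + c := rfl

lemma Phi_apply' (f : Fq → ZMod p) (v : ZMod p × Fq × ZMod p) (x : Fq) :
    Phi f v x = v.1 * f x + Algebra.trace (ZMod p) Fq (v.2.1 * x) + v.2.2 := rfl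

/-- zero set -/
def Z (w : Fq → ZMod p) : Finset Fq := Finset.univ.filter fun x => w x = 0

lemma mem_Z (w : Fq → ZMod p) (x : Fq) : x ∈ Z w ↔ w x = 0 := by simp [Z]

/-- Key hypothesis: fibre sizes. -/
def Key (f : Fq → ZMod p) (fs : Fq → ZMod p) : Prop := ∀ β t,
  (Finset.univ.filter fun x => f x - Algebra.trace (ZMod p) Fq (β * x) = t).card
    = if t = fs β then 1 else p + 1

lemma Z_lin {f : Fq → ZMod p} (hcq : Fintype.card Fq = p ^ 2) (b : Fq) (hb : b ≠ 0) (c : ZMod p) :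
    (Z (Phi f (0, b, c))).card = p := by
  refine Eq.trans ?_ (trace_fiber hcq b hb (-c))
  congr 1
  ext x
  simp [Z, Phi_apply, eq_neg_iff_add_eq_zero]

lemma Z_const {f : Fq → ZMod p} (c : ZMod p) (hc : c ≠ 0) :
    (Z (Phi f (0, 0, c))).card = 0 := by
  simp [Z, Phi_apply, hc]

lemma Z_zero {f : Fq → ZMod p} (hcq : Fintype.card Fq = p ^ 2) :
    (Z (Phi f (0, 0, 0))).card = p ^ 2 := by
  simp [Z, Phi_apply, hcq]

lemma Z_quad {f fs : Fq → ZMod p} (hK : Key f fs) (a : ZMod p) (ha : a ≠ 0) (b : Fq) (c : ZMod p) :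
    (Z (Phi f (a, b, c))).card = if c = -a * fs (-(a⁻¹ • b)) then 1 else p + 1 := by
  have := hK (-(a⁻¹ • b)) (- a⁻¹ * c)
  have e : (- a⁻¹ * c = fs (-(a⁻¹ • b))) ↔ (c = -a * fs (-(a⁻¹ • b))) := by
    constructor
    · intro h; rw [← h]; field_simp
    · intro h
      generalize fs (-(a⁻¹ • b)) = z at *
      rw [h]; field_simp
  simp only [e] at this
  rw [← this]
  congr 1
  ext x
  rw [mem_Z]
  simp only [Phi_apply, Finset.mem_filter, Finset.mem_univ, true_and, neg_mul, smul_mul_assoc,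
    map_neg, map_smul, smul_eq_mul]
  constructor
  · intro h
    have : c = - (a * f x + Algebra.trace (ZMod p) Fq (b * x)) := by linear_combination h
    rw [this]; field_simp; ring
  · intro h
    have : a * (f x + a⁻¹ * Algebra.trace (ZMod p) Fq (b * x)) = a * (-(a⁻¹ * c)) := by
      rw [← h]; ring
    field_simp at this
    linear_combination this

lemma two_lt (hodd : Odd p) : 3 ≤ p := by
  have := hp.out.two_le
  obtain ⟨k, hk⟩ := hodd
  omega

lemma Z_lt {f fs : Fq → ZMod p} (hodd : Odd p) (hcq : Fintype.card Fq = p ^ 2) (hK : Key f fs)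
    (v : ZMod p × Fq × ZMod p) (hv : v ≠ 0) : (Z (Phi f v)).card ≤ p + 1 := by
  obtain ⟨a, b, c⟩ := v
  by_cases ha : a = 0
  · subst ha
    by_cases hb : b = 0
    · subst hb
      rw [Z_const c (by rintro rfl; exact hv rfl)]; omega
    · rw [Z_lin hcq b hb]; omega
  · rw [Z_quad hK a ha]; split_ifs <;> omega

lemma Phi_inj {f fs : Fq → ZMod p} (hodd : Odd p) (hcq : Fintype.card Fq = p ^ 2) (hK : Key f fs) :
    Function.Injective (Phi f) := by
  rw [injective_iff_map_eq_zero]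
  intro v hv
  by_contra h
  have h1 := Z_lt hodd hcq hK v h
  rw [hv] at h1
  have h2 : (Z (0 : Fq → ZMod p)).card = p ^ 2 := by simp [Z, hcq]
  have := two_lt hodd
  nlinarith

lemma norm_add (hcq : Fintype.card Fq = p ^ 2) (w : Fq → ZMod p) [inst : DecidableEq (ZMod p)] :
    hammingNorm w + (Z w).card = p ^ 2 := by
  have := Finset.card_filter_add_card_filter_not (s := (Finset.univ : Finset Fq)) (fun x => w x ≠ 0)
  rw [Finset.card_univ, hcq] at this
  rw [← this]
  simp only [hammingNorm, Z, not_not]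
  congr!

/-- coefficient vectors vanishing at i and j -/
def K2 (f : Fq → ZMod p) (i j : Fq) : Finset (ZMod p × Fq × ZMod p) :=
  Finset.univ.filter fun v => Phi f v i = 0 ∧ Phi f v j = 0

def K3 (f : Fq → ZMod p) (i j k : Fq) : Finset (ZMod p × Fq × ZMod p) :=
  Finset.univ.filter fun v => Phi f v i = 0 ∧ Phi f v j = 0 ∧ Phi f v k = 0

lemma K2_card_a {f : Fq → ZMod p} (hcq : Fintype.card Fq = p ^ 2) {i j : Fq} (hij : i ≠ j)
    (a : ZMod p) : ((K2 f i j).filter fun v => v.1 = a).card = p := by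
  refine Eq.trans ?_ (trace_fiber hcq (i - j) (sub_ne_zero.2 hij) (a * (f j - f i)))
  refine Finset.card_bij' (fun v _ => v.2.1)
    (fun b _ => (a, b, -(a * f i + Algebra.trace (ZMod p) Fq (b * i)))) ?_ ?_ ?_ ?_
  · rintro ⟨a', b, c⟩ h
    simp only [K2, Finset.mem_filter, Finset.mem_univ, true_and, Phi_apply] at h ⊢
    obtain ⟨⟨h1, h2⟩, rfl⟩ := h
    rw [sub_mul, map_sub, mul_comm i, mul_comm j]
    linear_combination h1 - h2
  · intro b h
    simp only [K2, Finset.mem_filter, Finset.mem_univ, true_and, Phi_apply, and_true] at h ⊢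
    rw [sub_mul, map_sub, mul_comm i, mul_comm j] at h
    exact ⟨by ring, by linear_combination -h⟩
  · rintro ⟨a', b, c⟩ h
    simp only [K2, Finset.mem_filter, Finset.mem_univ, true_and, Phi_apply] at h ⊢
    obtain ⟨⟨h1, h2⟩, rfl⟩ := h
    refine Prod.ext rfl (Prod.ext rfl ?_)
    simp only
    linear_combination -h1
  · intro b h; rfl

lemma K2_card {f : Fq → ZMod p} (hcq : Fintype.card Fq = p ^ 2) {i j : Fq} (hij : i ≠ j) :
    (K2 f i j).card = p ^ 2 := by
  rw [Finset.card_eq_sum_card_fiberwise (f := fun v => v.1) (t := Finset.univ) (by simp)]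
  rw [Finset.sum_congr rfl (fun a _ => K2_card_a hcq hij a)]
  simp [ZMod.card, pow_two]


lemma K2_smul {f : Fq → ZMod p} {i j : Fq} {v : ZMod p × Fq × ZMod p} (hv : v ∈ K2 f i j)
    (s : ZMod p) : s • v ∈ K2 f i j := by
  simp only [K2, Finset.mem_filter, Finset.mem_univ, true_and, map_smul, Pi.smul_apply,
    smul_eq_mul] at hv ⊢
  simp [hv.1, hv.2]

lemma K3_smul {f : Fq → ZMod p} {i j k : Fq} {v : ZMod p × Fq × ZMod p} (hv : v ∈ K3 f i j k)
    (s : ZMod p) : s • v ∈ K3 f i j k := by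
  simp only [K3, Finset.mem_filter, Finset.mem_univ, true_and, map_smul, Pi.smul_apply,
    smul_eq_mul] at hv ⊢
  simp [hv.1, hv.2.1, hv.2.2]

lemma one_dim (K : Finset (ZMod p × Fq × ZMod p)) (hc : K.card = p)
    (hs : ∀ v ∈ K, ∀ s : ZMod p, s • v ∈ K) (v : ZMod p × Fq × ZMod p) (hv : v ∈ K) (hv0 : v ≠ 0)
    (w : ZMod p × Fq × ZMod p) (hw : w ∈ K) : ∃ s : ZMod p, w = s • v := by
  have hsub : Finset.univ.image (fun s : ZMod p => s • v) ⊆ K := by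
    intro x hx
    obtain ⟨s, _, rfl⟩ := Finset.mem_image.1 hx
    exact hs v hv s
  have hcard : (Finset.univ.image (fun s : ZMod p => s • v)).card = p := by
    rw [Finset.card_image_of_injective _ (smul_left_injective (ZMod p) hv0), Finset.card_univ,
      ZMod.card]
  have := Finset.eq_of_subset_of_card_le hsub (by rw [hcard, hc])
  rw [← this] at hw
  obtain ⟨s, _, rfl⟩ := Finset.mem_image.1 hw
  exact ⟨s, rfl⟩

lemma mem_K2 {f : Fq → ZMod p} {i j : Fq} {v : ZMod p × Fq × ZMod p} :
    v ∈ K2 f i j ↔ Phi f v i = 0 ∧ Phi f v j = 0 := by simp [K2]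

lemma mem_K3 {f : Fq → ZMod p} {i j k : Fq} {v : ZMod p × Fq × ZMod p} :
    v ∈ K3 f i j k ↔ Phi f v i = 0 ∧ Phi f v j = 0 ∧ Phi f v k = 0 := by simp [K3]

lemma K3_ge {f : Fq → ZMod p} (hcq : Fintype.card Fq = p ^ 2) {i j : Fq} (hij : i ≠ j) (k : Fq) :
    p ≤ (K3 f i j k).card := by
  have h1 := Finset.card_eq_sum_card_fiberwise (s := K2 f i j) (f := fun v => Phi f v k)
    (t := Finset.univ) (by simp)
  rw [K2_card hcq hij] at h1
  have h2 : ∀ t : ZMod p, ((K2 f i j).filter fun v => Phi f v k = t).card ≤ (K3 f i j k).card := by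
    intro t
    rcases Finset.eq_empty_or_nonempty ((K2 f i j).filter fun v => Phi f v k = t) with h | ⟨v0, h0⟩
    · rw [h]; simp
    · refine Finset.card_le_card_of_injOn (fun v => v - v0) ?_ ?_
      · intro v hv
        simp only [Finset.coe_filter, Set.mem_ofPred_eq, Finset.mem_filter, mem_K2] at hv h0
        simp only [SetLike.mem_coe, mem_K3, map_sub, Pi.sub_apply]
        rw [hv.1.1, hv.1.2, hv.2, h0.1.1, h0.1.2, h0.2]
        simp
      · intro a _ b _ hab
        simpa using hab
  have h3 := Finset.sum_le_card_nsmul (Finset.univ : Finset (ZMod p)) _ _ (fun t _ => h2 t)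
  rw [← h1, Finset.card_univ, ZMod.card, smul_eq_mul, pow_two] at h3
  exact Nat.le_of_mul_le_mul_left h3 hp.out.pos

lemma Z_of_two {f fs : Fq → ZMod p} (hcq : Fintype.card Fq = p ^ 2) (hK : Key f fs)
    {i j : Fq} (hij : i ≠ j) (v : ZMod p × Fq × ZMod p) (hv : v ∈ K2 f i j) (hv0 : v ≠ 0) :
    (Z (Phi f v)).card = if v.1 = 0 then p else p + 1 := by
  rw [mem_K2] at hv
  have h2 : 1 < (Z (Phi f v)).card := by
    rw [Finset.one_lt_card]
    exact ⟨i, (mem_Z _ _).2 hv.1, j, (mem_Z _ _).2 hv.2, hij⟩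
  obtain ⟨a, b, c⟩ := v
  by_cases ha : a = 0
  · subst ha
    by_cases hb : b = 0
    · subst hb
      rw [Z_const c (by rintro rfl; exact hv0 rfl)] at h2
      omega
    · simp [Z_lin hcq b hb]
  · rw [Z_quad hK a ha] at h2 ⊢
    simp only [ha, if_false]
    split_ifs at h2 ⊢
    · omega
    · rfl

/-- points different from `i, j` -/
def U (i j : Fq) : Finset Fq := (Finset.univ.erase i).erase j

lemma mem_U {i j k : Fq} : k ∈ U i j ↔ k ≠ i ∧ k ≠ j := by
  simp [U, and_comm]

lemma card_U (hcq : Fintype.card Fq = p ^ 2) {i j : Fq} (hij : i ≠ j) :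
    (U i j).card = p ^ 2 - 2 := by
  unfold U
  rw [Finset.card_erase_of_mem (by simp [hij.symm]), Finset.card_erase_of_mem (by simp),
    Finset.card_univ, hcq]
  omega

lemma card_U_Z (w : Fq → ZMod p) {i j : Fq} (hij : i ≠ j) (hi : w i = 0) (hj : w j = 0) :
    ((U i j).filter fun k => w k = 0).card + 2 = (Z w).card := by
  have hset : ((U i j).filter fun k => w k = 0) = ((Z w).erase i).erase j := by
    ext k
    simp only [Finset.mem_filter, mem_U, Finset.mem_erase, mem_Z]
    tauto
  have h1 : i ∈ Z w := (mem_Z _ _).2 hi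
  have h2 : j ∈ (Z w).erase i := by simp [mem_Z, hj, hij.symm]
  have := Finset.card_erase_add_one h1
  have := Finset.card_erase_add_one h2
  rw [hset]
  omega

lemma K3_card {f fs : Fq → ZMod p} (hodd : Odd p) (hcq : Fintype.card Fq = p ^ 2) (hK : Key f fs)
    {i j k : Fq} (hij : i ≠ j) (hki : k ≠ i) (hkj : k ≠ j) : (K3 f i j k).card = p := by
  have hp3 := two_lt hodd
  have hpp : 3 * p ≤ p ^ 2 := by nlinarith
  have hdc := Finset.sum_card_bipartiteAbove_eq_sum_card_bipartiteBelow
    (s := U i j) (t := K2 f i j) (fun k v => Phi f v k = 0)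
  have hl : ∀ k, Finset.bipartiteAbove (fun k v => Phi f v k = 0) (K2 f i j) k = K3 f i j k := by
    intro k
    ext v
    simp [mem_K2, mem_K3, and_assoc]
  simp only [hl] at hdc
  have hg : ∀ v ∈ K2 f i j, (Finset.bipartiteBelow (fun k v => Phi f v k = 0) (U i j) v).card
      + (if v.1 = 0 then 1 else 0) = (p - 1) + if v = 0 then p ^ 2 - p else 0 := by
    intro v hv
    have h1 := card_U_Z (Phi f v) hij (mem_K2.1 hv).1 (mem_K2.1 hv).2
    unfold Finset.bipartiteBelow
    by_cases hv0 : v = 0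
    · subst hv0
      have h0 : (Z (Phi f (0 : ZMod p × Fq × ZMod p))).card = p ^ 2 := Z_zero hcq
      rw [h0] at h1
      simp only [Prod.fst_zero, if_true]
      omega
    · rw [Z_of_two hcq hK hij v hv hv0] at h1
      simp only [hv0, if_false]
      split_ifs at h1 ⊢ <;> omega
  have hsum := Finset.sum_congr rfl hg
  rw [Finset.sum_add_distrib, Finset.sum_add_distrib, ← hdc] at hsum
  have e1 : ∑ v ∈ K2 f i j, (if v.1 = 0 then 1 else 0) = p := by
    rw [← Finset.card_filter]; exact K2_card_a hcq hij 0
  have e2 : ∑ v ∈ K2 f i j, (if v = 0 then p ^ 2 - p else 0) = p ^ 2 - p := by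
    rw [Finset.sum_ite_eq', if_pos]
    rw [mem_K2]; simp
  rw [e1, e2, Finset.sum_const, K2_card hcq hij, smul_eq_mul] at hsum
  have hsum2 : ∑ x ∈ U i j, (K3 f i j x).card = ∑ x ∈ U i j, p := by
    rw [Finset.sum_const, card_U hcq hij, smul_eq_mul]
    obtain ⟨m, rfl⟩ : ∃ m, p = m + 1 := ⟨p - 1, by omega⟩
    have a1 : (m + 1) ^ 2 - (m + 1) = m * (m + 1) := by
      rw [pow_two, ← Nat.sub_one_mul]; simp
    have a2 : (m + 1) ^ 2 - 2 + 2 = (m + 1) ^ 2 := by omega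
    rw [a1, Nat.add_sub_cancel] at hsum
    generalize ((m + 1) ^ 2 - 2) = X at *
    generalize (∑ x ∈ U i j, (K3 f i j x).card) = Y at *
    nlinarith
  have := (Finset.sum_eq_sum_iff_of_le (fun x _ => K3_ge hcq hij x)).1 hsum2.symm
  exact (this k (mem_U.2 ⟨hki, hkj⟩)).symm

lemma exists_dual {f fs : Fq → ZMod p} (hodd : Odd p) (hcq : Fintype.card Fq = p ^ 2)
    (hK : Key f fs) {i j k : Fq} (hij : i ≠ j) (hki : k ≠ i) (hkj : k ≠ j) :
    ∃ v, Phi f v i = 0 ∧ Phi f v j = 0 ∧ Phi f v k = 1 := by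
  have hp3 := two_lt hodd
  have : ∃ v ∈ K2 f i j, v ∉ K3 f i j k := by
    by_contra! h
    have := Finset.card_le_card (show K2 f i j ⊆ K3 f i j k from h)
    rw [K2_card hcq hij, K3_card hodd hcq hK hij hki hkj] at this
    nlinarith
  obtain ⟨v, h2, h3⟩ := this
  rw [mem_K2] at h2
  rw [mem_K3] at h3
  have hne : Phi f v k ≠ 0 := fun h => h3 ⟨h2.1, h2.2, h⟩
  refine ⟨(Phi f v k)⁻¹ • v, ?_, ?_, ?_⟩ <;> simp [h2.1, h2.2, hne]

lemma exists_K3 {f fs : Fq → ZMod p} (hodd : Odd p) (hcq : Fintype.card Fq = p ^ 2)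
    (hK : Key f fs) {i j k : Fq} (hij : i ≠ j) (hki : k ≠ i) (hkj : k ≠ j) :
    ∃ v ∈ K3 f i j k, v ≠ 0 := by
  have hp3 := two_lt hodd
  apply Finset.exists_mem_ne
  rw [K3_card hodd hcq hK hij hki hkj]; omega

lemma rf_eq (f : Fq → ZMod p) : rfCode p Fq f = Set.range (Phi f) := by
  ext w
  constructor
  · rintro ⟨a, c, b, h⟩
    exact ⟨(a, b, c), by funext x; rw [h x]; rfl⟩
  · rintro ⟨⟨a, b, c⟩, rfl⟩
    exact ⟨a, c, b, fun x => rfl⟩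

lemma mem_dual (f : Fq → ZMod p) (u : Fq → ZMod p) :
    u ∈ dualCode (rfCode p Fq f) ↔ ∀ v, ∑ x, u x * Phi f v x = 0 := by
  rw [rf_eq]
  simp only [dualCode, Set.mem_ofPred_eq, Set.forall_mem_range]

lemma dual_three {f fs : Fq → ZMod p} (hodd : Odd p) (hcq : Fintype.card Fq = p ^ 2)
    (hK : Key f fs) {i j k : Fq} (hij : i ≠ j) (hki : k ≠ i) (hkj : k ≠ j)
    (u : Fq → ZMod p) (hu : u ∈ dualCode (rfCode p Fq f))
    (hs : ∀ x, x ≠ i → x ≠ j → x ≠ k → u x = 0) : u k = 0 := by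
  obtain ⟨v, h1, h2, h3⟩ := exists_dual hodd hcq hK hij hki hkj
  have := (mem_dual f u).1 hu v
  rw [Finset.sum_eq_single k] at this
  · simpa [h3] using this
  · intro x _ hx
    by_cases hxi : x = i
    · rw [hxi, h1, mul_zero]
    · by_cases hxj : x = j
      · rw [hxj, h2, mul_zero]
      · rw [hs x hxi hxj hx, zero_mul]
  · simp

lemma dual_ge {f fs : Fq → ZMod p} (hodd : Odd p) (hcq : Fintype.card Fq = p ^ 2)
    (hK : Key f fs) (u : Fq → ZMod p) (hu : u ∈ dualCode (rfCode p Fq f)) (hu0 : u ≠ 0)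
    [inst : DecidableEq (ZMod p)] : 4 ≤ hammingNorm u := by
  have hp3 := two_lt hodd
  by_contra! hlt
  have : (Finset.univ.filter fun x => u x ≠ 0).card ≤ 3 := by
    unfold hammingNorm at hlt; omega
  obtain ⟨T, hT, hT3⟩ := Finset.exists_superset_card_eq this (by rw [hcq]; nlinarith)
  obtain ⟨k, hk⟩ := Function.ne_iff.1 hu0
  have hkT : k ∈ T := hT (by simpa using hk)
  have h2 : (T.erase k).card = 2 := by rw [Finset.card_erase_of_mem hkT, hT3]
  obtain ⟨i, j, hij, hT2⟩ := Finset.card_eq_two.1 h2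
  have hi : i ∈ T.erase k := by rw [hT2]; simp
  have hj : j ∈ T.erase k := by rw [hT2]; simp
  refine hk (dual_three hodd hcq hK hij (Finset.ne_of_mem_erase hi).symm
    (Finset.ne_of_mem_erase hj).symm u hu ?_)
  intro x hxi hxj hxk
  by_contra hx
  have : x ∈ T.erase k := Finset.mem_erase.2 ⟨hxk, hT (by simpa using hx)⟩
  rw [hT2] at this
  simp [hxi, hxj] at this

lemma block_iff {f fs : Fq → ZMod p} (hodd : Odd p) (hcq : Fintype.card Fq = p ^ 2)
    (hK : Key f fs) {i j k l : Fq} (hij : i ≠ j) (hki : k ≠ i) (hkj : k ≠ j)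
    (hli : l ≠ i) (hlj : l ≠ j) (hlk : l ≠ k)
    (v : ZMod p × Fq × ZMod p) (hv : v ∈ K3 f i j k) (hv0 : v ≠ 0) :
    (∃ u ∈ dualCode (rfCode p Fq f), ∀ x, u x ≠ 0 ↔ (x = i ∨ x = j ∨ x = k ∨ x = l))
      ↔ Phi f v l = 0 := by
  have hv' := mem_K3.1 hv
  constructor
  · rintro ⟨u, hu, hs⟩
    have h1 := (mem_dual f u).1 hu v
    rw [Finset.sum_eq_single l] at h1
    · exact (mul_eq_zero.1 h1).resolve_left ((hs l).2 (by simp))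
    · intro x _ hx
      by_cases hux : u x = 0
      · rw [hux, zero_mul]
      · rcases (hs x).1 hux with rfl | rfl | rfl | rfl
        · rw [hv'.1, mul_zero]
        · rw [hv'.2.1, mul_zero]
        · rw [hv'.2.2, mul_zero]
        · exact absurd rfl hx
    · simp
  · intro hl
    obtain ⟨w3, a1, a2, a3⟩ := exists_dual hodd hcq hK hij hki hkj
    obtain ⟨w2, b1, b2, b3⟩ := exists_dual hodd hcq hK hki.symm hij.symm hkj.symm
    obtain ⟨w1, c1, c2, c3⟩ := exists_dual hodd hcq hK hkj.symm hij hki.symm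
    let u : Fq → ZMod p := fun x => (if x = l then 1 else 0) - (if x = i then Phi f w1 l else 0)
      - (if x = j then Phi f w2 l else 0) - (if x = k then Phi f w3 l else 0)
    have hu : u ∈ dualCode (rfCode p Fq f) := by
      rw [mem_dual]
      intro w
      have hw : w - Phi f w i • w1 - Phi f w j • w2 - Phi f w k • w3 ∈ K3 f i j k := by
        rw [mem_K3]
        simp only [map_sub, map_smul, Pi.sub_apply, Pi.smul_apply, smul_eq_mul]
        simp [a1, a2, a3, b1, b2, b3, c1, c2, c3]
      obtain ⟨s, hs⟩ := one_dim _ (K3_card hodd hcq hK hij hki hkj) (fun v hv s => K3_smul hv s)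
        v hv hv0 _ hw
      have h5 := congrArg (fun z => Phi f z l) hs
      simp only [map_sub, map_smul, Pi.sub_apply, Pi.smul_apply, smul_eq_mul, hl, mul_zero] at h5
      simp only [u, sub_mul, ite_mul, zero_mul, one_mul, Finset.sum_sub_distrib,
        Finset.sum_ite_eq', Finset.mem_univ, if_true]
      linear_combination h5
    have hu0 : u ≠ 0 := by
      intro h
      have := congrFun h l
      simp [u, hli, hlj, hlk] at this
    have h4 := dual_ge hodd hcq hK u hu hu0
    have hsub : (Finset.univ.filter fun x => u x ≠ 0) ⊆ {i, j, k, l} := by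
      intro x hx
      rw [Finset.mem_filter] at hx
      by_contra h
      simp only [Finset.mem_insert, Finset.mem_singleton, not_or] at h
      apply hx.2
      simp [u, h.1, h.2.1, h.2.2.1, h.2.2.2]
    have heq := Finset.eq_of_subset_of_card_le hsub
      (Finset.card_le_four.trans (by unfold hammingNorm at h4; exact h4))
    refine ⟨u, hu, fun x => ?_⟩
    have := Finset.ext_iff.1 heq x
    simpa using this

lemma natcard_eq {α β : Type} (P : β → Prop) (s : Finset α) (g : α → β) (hg : ∀ a ∈ s, P (g a))
    (inj : ∀ a ∈ s, ∀ b ∈ s, g a = g b → a = b) (surj : ∀ b, P b → ∃ a ∈ s, g a = b) :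
    Nat.card {b // P b} = s.card := by
  have : Function.Bijective (fun a : s => (⟨g a.1, hg a.1 a.2⟩ : {b // P b})) := by
    constructor
    · intro a b hab
      exact Subtype.ext (inj _ a.2 _ b.2 (congrArg Subtype.val hab))
    · rintro ⟨b, hb⟩
      obtain ⟨a, ha, rfl⟩ := surj b hb
      exact ⟨⟨a, ha⟩, rfl⟩
  rw [← Nat.card_eq_of_bijective _ this]
  simp

/-- circles -/
def B (f : Fq → ZMod p) : Finset (ZMod p × Fq × ZMod p) :=
  Finset.univ.filter fun v => v.1 = 1 ∧ (Z (Phi f v)).card = p + 1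

lemma mem_B {f : Fq → ZMod p} {v : ZMod p × Fq × ZMod p} :
    v ∈ B f ↔ v.1 = 1 ∧ (Z (Phi f v)).card = p + 1 := by simp [B]

lemma B_inj {f fs : Fq → ZMod p} (hodd : Odd p) (hcq : Fintype.card Fq = p ^ 2) (hK : Key f fs)
    (v w : ZMod p × Fq × ZMod p) (hv : v ∈ B f) (hw : w ∈ B f)
    (h : ∀ x, Phi f v x = 0 ↔ Phi f w x = 0) : v = w := by
  have hp3 := two_lt hodd
  rw [mem_B] at hv hw
  have : 2 < (Z (Phi f v)).card := by omega
  obtain ⟨i, j, k, hi, hj, hk, hij, hik, hjk⟩ := Finset.two_lt_card_iff.1 this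
  rw [mem_Z] at hi hj hk
  have hv0 : v ≠ 0 := by rintro rfl; simp at hv
  obtain ⟨s, rfl⟩ := one_dim _ (K3_card hodd hcq hK hij hik.symm hjk.symm)
    (fun v hv s => K3_smul hv s) v (mem_K3.2 ⟨hi, hj, hk⟩) hv0 w
    (mem_K3.2 ⟨(h i).1 hi, (h j).1 hj, (h k).1 hk⟩)
  have : s = 1 := by simpa [hv.1] using hw.1
  rw [this, one_smul]

lemma Z_smul {w : Fq → ZMod p} {s : ZMod p} (hs : s ≠ 0) : Z (s • w) = Z w := by
  ext x
  simp [mem_Z, hs]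

lemma ne_of_Z {f fs : Fq → ZMod p} (hodd : Odd p) (hcq : Fintype.card Fq = p ^ 2) (hK : Key f fs)
    (v : ZMod p × Fq × ZMod p) (h : (Z (Phi f v)).card = p + 1) : v.1 ≠ 0 := by
  have hp3 := two_lt hodd
  obtain ⟨a, b, c⟩ := v
  rintro (rfl : a = 0)
  by_cases hb : b = 0
  · subst hb
    by_cases hc : c = 0
    · subst hc
      rw [Z_zero hcq] at h
      nlinarith
    · rw [Z_const c hc] at h; omega
  · rw [Z_lin hcq b hb] at h; omega

lemma exists_B {f fs : Fq → ZMod p} (hodd : Odd p) (hcq : Fintype.card Fq = p ^ 2) (hK : Key f fs)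
    (v : ZMod p × Fq × ZMod p) (h : (Z (Phi f v)).card = p + 1) :
    ∃ w ∈ B f, ∀ x, Phi f w x = 0 ↔ Phi f v x = 0 := by
  have h1 := ne_of_Z hodd hcq hK v h
  refine ⟨v.1⁻¹ • v, ?_, ?_⟩
  · rw [mem_B, map_smul, Z_smul (inv_ne_zero h1)]
    exact ⟨by simp [h1], h⟩
  · intro x
    simp [h1]

lemma norm_iff (hodd : Odd p) (hcq : Fintype.card Fq = p ^ 2) (w : Fq → ZMod p)
    [inst : DecidableEq (ZMod p)] :
    hammingNorm w = p ^ 2 - p - 1 ↔ (Z w).card = p + 1 := by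
  have := norm_add hcq w
  have hp3 := two_lt hodd
  have : 3 * p ≤ p ^ 2 := by nlinarith
  omega

lemma compl_design {f fs : Fq → ZMod p} (hodd : Odd p) (hcq : Fintype.card Fq = p ^ 2)
    (hK : Key f fs) : Holds2DesignCompl (rfCode p Fq f) (p ^ 2 - p - 1) p := by
  intro i j hij
  rw [natcard_eq _ ((K2 f i j).filter fun v => v.1 = 1) (fun v => {k | Phi f v k = 0})]
  · exact K2_card_a hcq hij 1
  · intro v hv
    rw [Finset.mem_filter] at hv
    have hv0 : v ≠ 0 := by rintro rfl; simp at hv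
    have := Z_of_two hcq hK hij v hv.1 hv0
    simp only [hv.2, one_ne_zero, if_false] at this
    have h2 := mem_K2.1 hv.1
    refine ⟨⟨Phi f v, ?_, by rw [norm_iff hodd hcq]; exact this, rfl⟩, h2.1, h2.2⟩
    rw [rf_eq]; exact ⟨v, rfl⟩
  · intro v hv w hw h
    have key : ∀ v ∈ ((K2 f i j).filter fun v => v.1 = 1), v ∈ B f := by
      intro v hv
      rw [Finset.mem_filter] at hv
      have hv0 : v ≠ 0 := by rintro rfl; simp at hv
      have := Z_of_two hcq hK hij v hv.1 hv0
      simp only [hv.2, one_ne_zero, if_false] at this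
      exact mem_B.2 ⟨hv.2, this⟩
    exact B_inj hodd hcq hK v w (key v hv) (key w hw) (fun x => Set.ext_iff.1 h x)
  · rintro S ⟨⟨c, hc, hn, rfl⟩, hi, hj⟩
    rw [rf_eq] at hc
    obtain ⟨v, rfl⟩ := hc
    rw [norm_iff hodd hcq] at hn
    obtain ⟨w, hw, hx⟩ := exists_B hodd hcq hK v hn
    refine ⟨w, ?_, ?_⟩
    · rw [Finset.mem_filter, mem_K2]
      exact ⟨⟨(hx i).2 hi, (hx j).2 hj⟩, (mem_B.1 hw).1⟩
    · ext x; exact hx x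

lemma card_tangent {f fs : Fq → ZMod p} (hodd : Odd p) (hcq : Fintype.card Fq = p ^ 2)
    (hK : Key f fs) (s : Finset (ZMod p)) (hs : (0 : ZMod p) ∉ s) :
    (Finset.univ.filter fun v : ZMod p × Fq × ZMod p =>
      v.1 ∈ s ∧ (Z (Phi f v)).card = 1).card = s.card * p ^ 2 := by
  have hp3 := two_lt hodd
  have key : ∀ a ∈ s, ∀ b c, (Z (Phi f (a, b, c))).card = 1 ↔ c = -a * fs (-(a⁻¹ • b)) := by
    intro a ha b c
    have ha0 : a ≠ 0 := by rintro rfl; exact hs ha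
    rw [Z_quad hK a ha0]
    split_ifs with h
    · simp [h]
    · simp only [h, iff_false]; omega
  have : s.card * p ^ 2 = (s ×ˢ (Finset.univ : Finset Fq)).card := by
    rw [Finset.card_product, Finset.card_univ, hcq]
  rw [this]
  refine Finset.card_bij' (fun v _ => (v.1, v.2.1))
    (fun x _ => (x.1, x.2, -x.1 * fs (-(x.1⁻¹ • x.2)))) ?_ ?_ ?_ ?_
  · rintro ⟨a, b, c⟩ h
    simp only [Finset.mem_filter] at h
    simp [h.2.1]
  · rintro ⟨a, b⟩ h
    simp only [Finset.mem_product, Finset.mem_univ, and_true] at h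
    simp only [Finset.mem_filter, Finset.mem_univ, true_and]
    exact ⟨h, (key a h b _).2 rfl⟩
  · rintro ⟨a, b, c⟩ h
    simp only [Finset.mem_filter, Finset.mem_univ, true_and] at h
    have := (key a h.1 b c).1 h.2
    simp only [this]
  · rintro ⟨a, b⟩ h; rfl

lemma card_secant {f fs : Fq → ZMod p} (hodd : Odd p) (hcq : Fintype.card Fq = p ^ 2)
    (hK : Key f fs) (s : Finset (ZMod p)) (hs : (0 : ZMod p) ∉ s) :
    (Finset.univ.filter fun v : ZMod p × Fq × ZMod p =>
      v.1 ∈ s ∧ (Z (Phi f v)).card = p + 1).card = s.card * (p ^ 2 * (p - 1)) := by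
  have hp3 := two_lt hodd
  have h1 := card_tangent hodd hcq hK s hs
  have h2 : (Finset.univ.filter fun v : ZMod p × Fq × ZMod p => v.1 ∈ s).card
      = s.card * (p ^ 2 * p) := by
    have : (Finset.univ.filter fun v : ZMod p × Fq × ZMod p => v.1 ∈ s) = s ×ˢ Finset.univ := by
      ext v; simp
    rw [this, Finset.card_product, Finset.card_univ, Fintype.card_prod, hcq, ZMod.card]
  have h3 := Finset.card_filter_add_card_filter_not
    (s := Finset.univ.filter fun v : ZMod p × Fq × ZMod p => v.1 ∈ s)
    (fun v => (Z (Phi f v)).card = 1)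
  rw [Finset.filter_filter, Finset.filter_filter, h1, h2] at h3
  have h4 : (Finset.univ.filter fun v : ZMod p × Fq × ZMod p =>
      v.1 ∈ s ∧ (Z (Phi f v)).card = p + 1) = (Finset.univ.filter fun v : ZMod p × Fq × ZMod p =>
      v.1 ∈ s ∧ ¬ (Z (Phi f v)).card = 1) := by
    apply Finset.filter_congr
    rintro ⟨a, b, c⟩ _
    apply and_congr_right
    intro ha
    have ha0 : a ≠ 0 := by rintro rfl; exact hs ha
    rw [Z_quad hK a ha0]
    split_ifs <;> omega
  rw [h4]
  obtain ⟨m, rfl⟩ : ∃ m, p = m + 1 := ⟨p - 1, by omega⟩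
  rw [Nat.add_sub_cancel]
  nlinarith

lemma card_B {f fs : Fq → ZMod p} (hodd : Odd p) (hcq : Fintype.card Fq = p ^ 2)
    (hK : Key f fs) : (B f).card = p ^ 2 * (p - 1) := by
  have := card_secant hodd hcq hK {1} (by simp)
  simpa [B] using this

lemma B_filter {f fs : Fq → ZMod p} (hcq : Fintype.card Fq = p ^ 2)
    (hK : Key f fs) {i j : Fq} (hij : i ≠ j) :
    ((B f).filter fun v => Phi f v i = 0 ∧ Phi f v j = 0)
      = ((K2 f i j).filter fun v => v.1 = 1) := by
  ext v
  simp only [Finset.mem_filter, mem_B, mem_K2]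
  constructor
  · rintro ⟨⟨h1, h2⟩, h3⟩; exact ⟨h3, h1⟩
  · rintro ⟨h3, h1⟩
    have hv0 : v ≠ 0 := by rintro rfl; simp at h1
    have := Z_of_two hcq hK hij v (mem_K2.2 h3) hv0
    simp only [h1, one_ne_zero, if_false] at this
    exact ⟨⟨h1, this⟩, h3⟩

lemma card_B_i {f fs : Fq → ZMod p} (hodd : Odd p) (hcq : Fintype.card Fq = p ^ 2)
    (hK : Key f fs) (i : Fq) : ((B f).filter fun v => Phi f v i = 0).card = p ^ 2 - 1 := by
  have hdc := Finset.sum_card_bipartiteAbove_eq_sum_card_bipartiteBelow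
    (s := (Finset.univ : Finset Fq).erase i) (t := (B f).filter fun v => Phi f v i = 0)
    (fun k v => Phi f v k = 0)
  have h1 : ∀ j ∈ (Finset.univ : Finset Fq).erase i, (Finset.bipartiteAbove
      (fun k v => Phi f v k = 0) ((B f).filter fun v => Phi f v i = 0) j).card = p := by
    intro j hj
    have hij : i ≠ j := (Finset.ne_of_mem_erase hj).symm
    unfold Finset.bipartiteAbove
    rw [Finset.filter_filter, B_filter hcq hK hij, K2_card_a hcq hij]
  have h2 : ∀ v ∈ (B f).filter fun v => Phi f v i = 0, (Finset.bipartiteBelow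
      (fun k v => Phi f v k = 0) ((Finset.univ : Finset Fq).erase i) v).card = p := by
    intro v hv
    rw [Finset.mem_filter, mem_B] at hv
    have : (Finset.bipartiteBelow
      (fun k v => Phi f v k = 0) ((Finset.univ : Finset Fq).erase i) v) = (Z (Phi f v)).erase i := by
      ext x; simp [mem_Z]
    rw [this, Finset.card_erase_of_mem ((mem_Z _ _).2 hv.2), hv.1.2]
    simp
  rw [Finset.sum_congr rfl h1, Finset.sum_congr rfl h2, Finset.sum_const, Finset.sum_const,
    smul_eq_mul, smul_eq_mul, Finset.card_erase_of_mem (Finset.mem_univ _), Finset.card_univ,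
    hcq] at hdc
  exact (Nat.eq_of_mul_eq_mul_right hp.out.pos hdc).symm

lemma support_design {f fs : Fq → ZMod p} (hodd : Odd p) (hcq : Fintype.card Fq = p ^ 2)
    (hK : Key f fs) :
    Holds2Design (rfCode p Fq f) (p ^ 2 - p - 1) ((p - 2) * (p ^ 2 - p - 1)) := by
  intro i j hij
  rw [natcard_eq _ ((B f).filter fun v => Phi f v i ≠ 0 ∧ Phi f v j ≠ 0)
    (fun v => {k | Phi f v k ≠ 0})]
  · have hp3 := two_lt hodd
    have c0 := card_B hodd hcq hK
    have c1 := card_B_i hodd hcq hK i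
    have c2 := card_B_i hodd hcq hK j
    have c3 := B_filter hcq hK hij
    have c4 := K2_card_a (f := f) hcq hij 1
    rw [← c3] at c4
    have d1 := Finset.card_filter_add_card_filter_not (s := B f) (fun v => Phi f v i = 0)
    have d2 := Finset.card_filter_add_card_filter_not
      (s := (B f).filter fun v => Phi f v j = 0) (fun v => Phi f v i = 0)
    have d3 := Finset.card_filter_add_card_filter_not
      (s := (B f).filter fun v => ¬ Phi f v i = 0) (fun v => Phi f v j = 0)
    simp only [Finset.filter_filter] at d1 d2 d3
    have e1 : ((B f).filter fun v => Phi f v j = 0 ∧ Phi f v i = 0)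
      = ((B f).filter fun v => Phi f v i = 0 ∧ Phi f v j = 0) :=
      Finset.filter_congr (fun _ _ => and_comm)
    have e2 : ((B f).filter fun v => Phi f v j = 0 ∧ ¬ Phi f v i = 0)
      = ((B f).filter fun v => ¬ Phi f v i = 0 ∧ Phi f v j = 0) :=
      Finset.filter_congr (fun _ _ => and_comm)
    rw [e1, e2] at d2
    obtain ⟨m, rfl⟩ : ∃ m, p = m + 2 := ⟨p - 2, by omega⟩
    have g1 : (m + 2) ^ 2 - (m + 2) - 1 = m ^ 2 + 3 * m + 1 := by
      have : (m + 2) ^ 2 = (m ^ 2 + 3 * m + 1) + 1 + (m + 2) := by ring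
      omega
    have g2 : (m + 2) ^ 2 - 1 = m ^ 2 + 4 * m + 3 := by
      have : (m + 2) ^ 2 = (m ^ 2 + 4 * m + 3) + 1 := by ring
      omega
    have g3 : (m + 2) ^ 2 * (m + 2 - 1) = m ^ 3 + 5 * m ^ 2 + 8 * m + 4 := by
      have : m + 2 - 1 = m + 1 := by omega
      rw [this]; ring
    have g4 : (m + 2 - 2) * (m ^ 2 + 3 * m + 1) = m ^ 3 + 3 * m ^ 2 + m := by
      rw [Nat.add_sub_cancel]; ring
    rw [g1, g4]
    rw [g2] at c1 c2
    rw [g3] at c0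
    simp only [ne_eq]
    omega
  · intro v hv
    rw [Finset.mem_filter, mem_B] at hv
    refine ⟨⟨Phi f v, ?_, by rw [norm_iff hodd hcq]; exact hv.1.2, rfl⟩, hv.2.1, hv.2.2⟩
    rw [rf_eq]; exact ⟨v, rfl⟩
  · intro v hv w hw h
    rw [Finset.mem_filter] at hv hw
    exact B_inj hodd hcq hK v w hv.1 hw.1 (fun x => not_iff_not.1 (Set.ext_iff.1 h x))
  · rintro S ⟨⟨c, hc, hn, rfl⟩, hi, hj⟩
    rw [rf_eq] at hc
    obtain ⟨v, rfl⟩ := hc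
    rw [norm_iff hodd hcq] at hn
    obtain ⟨w, hw, hx⟩ := exists_B hodd hcq hK v hn
    refine ⟨w, ?_, ?_⟩
    · rw [Finset.mem_filter]
      exact ⟨hw, fun h => hi ((hx i).1 h), fun h => hj ((hx j).1 h)⟩
    · ext x; exact not_congr (hx x)

/-- `S` is the support of a dual word of weight four. -/
def IsBlk (f : Fq → ZMod p) (S : Finset Fq) : Prop :=
  S.card = 4 ∧ ∃ u ∈ dualCode (rfCode p Fq f), ∀ x, u x ≠ 0 ↔ x ∈ S

/-- blocks through two points -/
def T (f : Fq → ZMod p) (i j : Fq) : Finset (Finset Fq) :=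
  Finset.univ.filter fun S => IsBlk f S ∧ i ∈ S ∧ j ∈ S

lemma mem_T {f : Fq → ZMod p} {i j : Fq} {S : Finset Fq} :
    S ∈ T f i j ↔ IsBlk f S ∧ i ∈ S ∧ j ∈ S := by simp [T]

lemma card_T_k {f fs : Fq → ZMod p} (hodd : Odd p) (hcq : Fintype.card Fq = p ^ 2)
    (hK : Key f fs) {i j k : Fq} (hij : i ≠ j) (hki : k ≠ i) (hkj : k ≠ j)
    (v : ZMod p × Fq × ZMod p) (hv : v ∈ K3 f i j k) (hv0 : v ≠ 0) :
    ((T f i j).filter fun S => k ∈ S).card = (if v.1 = 0 then p else p + 1) - 3 := by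
  have hv' := mem_K3.1 hv
  have hz := Z_of_two hcq hK hij v (mem_K2.2 ⟨hv'.1, hv'.2.1⟩) hv0
  have hc : (((Z (Phi f v)).erase i).erase j |>.erase k).card
      = (if v.1 = 0 then p else p + 1) - 3 := by
    rw [Finset.card_erase_of_mem, Finset.card_erase_of_mem, Finset.card_erase_of_mem, hz]
    · omega
    · simp [mem_Z, hv']
    · simp [mem_Z, hv', hij.symm]
    · simp [mem_Z, hv', hki, hkj]
  rw [← hc]
  symm
  refine Finset.card_bij (fun l _ => {i, j, k, l}) ?_ ?_ ?_
  · intro l hl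
    simp only [Finset.mem_erase, mem_Z] at hl
    obtain ⟨hlk, hlj, hli, hl0⟩ := hl
    rw [Finset.mem_filter, mem_T]
    refine ⟨⟨⟨?_, ?_⟩, by simp, by simp⟩, by simp⟩
    · rw [Finset.card_insert_of_notMem, Finset.card_insert_of_notMem,
        Finset.card_insert_of_notMem, Finset.card_singleton]
      · simp [hlk.symm]
      · simp [hkj.symm, hlj.symm]
      · simp [hij, hki.symm, hli.symm]
    · obtain ⟨u, hu, hs⟩ := (block_iff hodd hcq hK hij hki hkj hli hlj hlk v hv hv0).2 hl0
      exact ⟨u, hu, fun x => by rw [hs x]; simp⟩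
  · intro l hl l' hl' h
    simp only [Finset.mem_erase, mem_Z] at hl hl'
    have : l ∈ ({i, j, k, l'} : Finset Fq) := by rw [← h]; simp
    simpa [hl.1, hl.2.1, hl.2.2.1] using this
  · intro S hS
    rw [Finset.mem_filter, mem_T] at hS
    obtain ⟨⟨⟨h4, u, hu, hs⟩, hi, hj⟩, hk⟩ := hS
    have h1 : (((S.erase i).erase j).erase k).card = 1 := by
      rw [Finset.card_erase_of_mem, Finset.card_erase_of_mem, Finset.card_erase_of_mem, h4]
      · exact hi
      · simp [hij.symm, hj]
      · simp [hki, hkj, hk]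
    obtain ⟨l, hl⟩ := Finset.card_eq_one.1 h1
    have hl' : l ∈ ((S.erase i).erase j).erase k := by rw [hl]; simp
    simp only [Finset.mem_erase] at hl'
    obtain ⟨hlk, hlj, hli, hlS⟩ := hl'
    have hSe : ∀ x, x ∈ S ↔ (x = i ∨ x = j ∨ x = k ∨ x = l) := by
      intro x
      constructor
      · intro hx
        by_contra! h
        have : x ∈ ((S.erase i).erase j).erase k := by
          simp only [Finset.mem_erase]; exact ⟨h.2.2.1, h.2.1, h.1, hx⟩
        rw [hl] at this
        exact h.2.2.2 (Finset.mem_singleton.1 this)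
      · rintro (rfl | rfl | rfl | rfl) <;> assumption
    refine ⟨l, ?_, ?_⟩
    · simp only [Finset.mem_erase, mem_Z]
      refine ⟨hlk, hlj, hli, ?_⟩
      exact (block_iff hodd hcq hK hij hki hkj hli hlj hlk v hv hv0).1
        ⟨u, hu, fun x => by rw [hs x, hSe x]⟩
    · ext x; simp [hSe x]

lemma card_T {f fs : Fq → ZMod p} (hodd : Odd p) (hcq : Fintype.card Fq = p ^ 2)
    (hK : Key f fs) {i j : Fq} (hij : i ≠ j) :
    2 * (T f i j).card = (p ^ 2 - 3) * (p - 2) := by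
  have hp3 := two_lt hodd
  have hdc := Finset.sum_card_bipartiteAbove_eq_sum_card_bipartiteBelow
    (s := T f i j) (t := U i j) (fun S k => k ∈ S)
  have hl : ∀ S ∈ T f i j, (Finset.bipartiteAbove (fun (S : Finset Fq) k => k ∈ S)
      (U i j) S).card = 2 := by
    intro S hS
    rw [mem_T] at hS
    have : (Finset.bipartiteAbove (fun (S : Finset Fq) k => k ∈ S) (U i j) S)
        = (S.erase i).erase j := by
      ext x
      simp only [Finset.mem_bipartiteAbove, mem_U, Finset.mem_erase]; tauto
    rw [this, Finset.card_erase_of_mem (by simp [hij.symm, hS.2.2]),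
      Finset.card_erase_of_mem hS.2.1, hS.1.1]
  obtain ⟨v0, hv0, hne⟩ := Finset.exists_mem_ne (s := (K2 f i j).filter fun v => v.1 = 0)
    (by rw [K2_card_a hcq hij]; omega) 0
  have hv0' := Finset.mem_filter.1 hv0
  have hv2 := mem_K2.1 hv0'.1
  have hr : ∀ k ∈ U i j, (Finset.bipartiteBelow (fun (S : Finset Fq) k => k ∈ S)
      (T f i j) k).card = if Phi f v0 k = 0 then p - 3 else p - 2 := by
    intro k hk
    obtain ⟨hki, hkj⟩ := mem_U.1 hk
    unfold Finset.bipartiteBelow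
    split_ifs with h
    · rw [card_T_k hodd hcq hK hij hki hkj v0 (mem_K3.2 ⟨hv2.1, hv2.2, h⟩) hne, if_pos hv0'.2]
    · obtain ⟨v, hv, hvne⟩ := exists_K3 hodd hcq hK hij hki hkj
      rw [card_T_k hodd hcq hK hij hki hkj v hv hvne, if_neg]
      · omega
      · intro h0
        apply h
        have hv' := mem_K3.1 hv
        obtain ⟨s, rfl⟩ := one_dim _ (K2_card_a (f := f) hcq hij 0) (by
          intro w hw s
          rw [Finset.mem_filter] at hw ⊢
          exact ⟨K2_smul hw.1 s, by simp [hw.2]⟩) v0 hv0 hne v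
          (Finset.mem_filter.2 ⟨mem_K2.2 ⟨hv'.1, hv'.2.1⟩, h0⟩)
        have hs : s ≠ 0 := by rintro rfl; simp at hvne
        have := hv'.2.2
        simpa [hs] using this
  rw [Finset.sum_congr rfl hl, Finset.sum_congr rfl hr, Finset.sum_const, Finset.sum_ite,
    Finset.sum_const, Finset.sum_const, smul_eq_mul, smul_eq_mul, smul_eq_mul] at hdc
  have h1 := card_U_Z (Phi f v0) hij hv2.1 hv2.2
  rw [Z_of_two hcq hK hij v0 hv0'.1 hne, if_pos hv0'.2] at h1
  have h2 := Finset.card_filter_add_card_filter_not (s := U i j) (fun k => Phi f v0 k = 0)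
  rw [card_U hcq hij] at h2
  rw [mul_comm, hdc]
  obtain ⟨m, hm⟩ : ∃ m, p = m + 3 := ⟨p - 3, by omega⟩
  have g1 : p ^ 2 = m ^ 2 + 6 * m + 9 := by rw [hm]; ring
  have h1' : ((U i j).filter fun k => Phi f v0 k = 0).card = m + 1 := by omega
  have h2' : ((U i j).filter fun k => ¬ Phi f v0 k = 0).card = m ^ 2 + 5 * m + 6 := by omega
  have g2 : p ^ 2 - 3 = m ^ 2 + 6 * m + 6 := by omega
  have g3 : p - 2 = m + 1 := by omega
  have g4 : p - 3 = m := by omega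
  rw [h1', h2', g2, g3, g4]
  ring

lemma dual_design {f fs : Fq → ZMod p} (hodd : Odd p) (hcq : Fintype.card Fq = p ^ 2)
    (hK : Key f fs) :
    Holds2Design (dualCode (rfCode p Fq f)) 4 ((p ^ 2 - 3) * (p - 2) / 2) := by
  intro i j hij
  rw [natcard_eq _ (T f i j) (fun S => (S : Set Fq))]
  · have := card_T hodd hcq hK hij
    omega
  · intro S hS
    rw [mem_T] at hS
    obtain ⟨⟨h4, u, hu, hs⟩, hi, hj⟩ := hS
    refine ⟨⟨u, hu, ?_, ?_⟩, hi, hj⟩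
    · rw [← h4]
      unfold hammingNorm
      congr 1
      ext x; simp [← hs x]
    · ext x; exact (hs x).symm
  · intro S _ S' _ h
    exact Finset.coe_injective h
  · rintro S ⟨⟨u, hu, hn, rfl⟩, hi, hj⟩
    refine ⟨Finset.univ.filter fun x => u x ≠ 0, ?_, by simp⟩
    rw [mem_T]
    refine ⟨⟨?_, u, hu, by simp⟩, by simpa using hi, by simpa using hj⟩
    rw [← hn]
    unfold hammingNorm
    congr!

lemma card_rf {f fs : Fq → ZMod p} (hodd : Odd p) (hcq : Fintype.card Fq = p ^ 2)
    (hK : Key f fs) : Nat.card (rfCode p Fq f) = p ^ 4 := by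
  rw [rf_eq, Nat.card_range_of_injective (Phi_inj hodd hcq hK), Nat.card_eq_fintype_card,
    Fintype.card_prod, Fintype.card_prod, ZMod.card, hcq]
  ring

lemma card_dual {f fs : Fq → ZMod p} (hodd : Odd p) (hcq : Fintype.card Fq = p ^ 2)
    (hK : Key f fs) : Nat.card (dualCode (rfCode p Fq f)) = p ^ (p ^ 2 - 4) := by
  have hp2 := hp.out.two_le
  let W : Submodule (ZMod p) (Fq → ZMod p) := LinearMap.range (Phi f)
  have hW : Module.finrank (ZMod p) W = 4 := by
    have h1 := card_rf hodd hcq hK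
    have h2 : Nat.card (rfCode p Fq f) = Nat.card W := by rw [rf_eq]; rfl
    have h3 := Module.card_eq_pow_finrank (K := ZMod p) (V := W)
    rw [h2, Nat.card_eq_fintype_card, h3, ZMod.card] at h1
    exact Nat.pow_right_injective hp2 h1
  let e := dotProductEquiv (ZMod p) Fq
  let D := W.dualAnnihilator.map e.symm.toLinearMap
  have hD : (D : Set (Fq → ZMod p)) = dualCode (rfCode p Fq f) := by
    ext u
    rw [mem_dual]
    constructor
    · rintro ⟨φ, hφ, rfl⟩ v
      have := (Submodule.mem_dualAnnihilator φ).1 hφ (Phi f v) ⟨v, rfl⟩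
      obtain ⟨u, rfl⟩ := e.surjective φ
      have h6 : e.symm.toLinearMap (e u) = u := e.symm_apply_apply u
      rw [h6]
      simpa [e, dotProduct] using this
    · intro h
      refine ⟨e u, ?_, by simp⟩
      rw [SetLike.mem_coe, Submodule.mem_dualAnnihilator]
      rintro _ ⟨v, rfl⟩
      simpa [e, dotProduct] using h v
  have hf : Module.finrank (ZMod p) D = p ^ 2 - 4 := by
    have h1 : Module.finrank (ZMod p) D = Module.finrank (ZMod p) W.dualAnnihilator :=
      LinearEquiv.finrank_map_eq e.symm _
    have h2 := Subspace.finrank_add_finrank_dualAnnihilator_eq W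
    rw [Module.finrank_fintype_fun_eq_card, hcq, hW] at h2
    omega
  rw [← hD]
  have h3 := Module.card_eq_pow_finrank (K := ZMod p) (V := D)
  rw [ZMod.card, hf] at h3
  rw [← h3, ← Nat.card_eq_fintype_card]
  rfl

lemma map_rep {α : Type} (s : Finset α) (w : α → ℕ) (n m : ℕ) (hc : s.card = n)
    (h : ∀ a ∈ s, w a = m) : s.val.map w = Multiset.replicate n m := by
  rw [Multiset.map_congr rfl h, Multiset.map_const', ← hc]; rfl

lemma map_split {α : Type} (s : Finset α) (w : α → ℕ) (P : α → Prop) [DecidablePred P]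
    [DecidablePred fun a => ¬ P a] :
    s.val.map w = (s.filter P).val.map w + (s.filter fun a => ¬ P a).val.map w := by
  rw [← Multiset.map_add, Finset.filter_val, Finset.filter_val]
  congr 1
  convert (Multiset.filter_add_not P s.val).symm

lemma weights {f fs : Fq → ZMod p} (hodd : Odd p) (hcq : Fintype.card Fq = p ^ 2)
    (hK : Key f fs) [Fintype (rfCode p Fq f)] :
    ((rfCode p Fq f).toFinset.val.map fun c => hammingNorm c)
      = Multiset.replicate 1 0
        + Multiset.replicate (p ^ 2 * (p - 1) ^ 2) (p ^ 2 - p - 1)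
        + Multiset.replicate (p * (p ^ 2 - 1)) (p ^ 2 - p)
        + Multiset.replicate (p ^ 2 * (p - 1)) (p ^ 2 - 1)
        + Multiset.replicate (p - 1) (p ^ 2) := by
  have hp3 := two_lt hodd
  have hpp : 3 * p ≤ p ^ 2 := by nlinarith
  have h0 : (rfCode p Fq f).toFinset = Finset.univ.image (Phi f) := by
    ext w; rw [Set.mem_toFinset, rf_eq]; simp
  have hwt : ∀ v, hammingNorm (Phi f v) = p ^ 2 - (Z (Phi f v)).card := by
    intro v
    have := norm_add hcq (Phi f v)
    omega
  rw [h0, Finset.image_val_of_injOn (Phi_inj hodd hcq hK).injOn, Multiset.map_map]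
  simp only [Function.comp_def, hwt]
  let w : ZMod p × Fq × ZMod p → ℕ := fun v => p ^ 2 - (Z (Phi f v)).card
  change Multiset.map w _ = _
  rw [map_split _ w (fun v => v.1 = 0), map_split (Finset.univ.filter _) w (fun v => v.2.1 = 0),
    map_split ((Finset.univ.filter _).filter _) w (fun v => v.2.2 = 0),
    map_split (Finset.univ.filter fun v => ¬ v.1 = 0) w (fun v => (Z (Phi f v)).card = 1)]
  simp only [Finset.filter_filter]
  have r1 : (Finset.univ.filter fun v : ZMod p × Fq × ZMod p =>
      (v.1 = 0 ∧ v.2.1 = 0) ∧ v.2.2 = 0).val.map w = Multiset.replicate 1 0 := by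
    apply map_rep
    · rw [Finset.card_eq_one]
      refine ⟨0, ?_⟩
      ext ⟨a, b, c⟩
      simp [Prod.ext_iff, and_assoc]
    · rintro ⟨a, b, c⟩ h
      simp only [Finset.mem_filter] at h
      obtain ⟨_, ⟨rfl, rfl⟩, rfl⟩ := h
      simp only [w, Z_zero hcq]; omega
  have r2 : (Finset.univ.filter fun v : ZMod p × Fq × ZMod p =>
      (v.1 = 0 ∧ v.2.1 = 0) ∧ ¬ v.2.2 = 0).val.map w = Multiset.replicate (p - 1) (p ^ 2) := by
    apply map_rep
    · have : (Finset.univ.filter fun v : ZMod p × Fq × ZMod p =>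
          (v.1 = 0 ∧ v.2.1 = 0) ∧ ¬ v.2.2 = 0)
          = ({0} : Finset (ZMod p)) ×ˢ ({0} : Finset Fq) ×ˢ (Finset.univ.erase (0 : ZMod p)) := by
        ext ⟨a, b, c⟩
        simp only [Finset.mem_filter, Finset.mem_univ, true_and, Finset.mem_product,
          Finset.mem_singleton, Finset.mem_erase, and_true]
        tauto
      rw [this, Finset.card_product, Finset.card_product, Finset.card_erase_of_mem (by simp),
        Finset.card_univ, ZMod.card]
      simp
    · rintro ⟨a, b, c⟩ h
      simp only [Finset.mem_filter] at h
      obtain ⟨_, ⟨rfl, rfl⟩, hc⟩ := h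
      simp only [w, Z_const c hc]; omega
  have r3 : (Finset.univ.filter fun v : ZMod p × Fq × ZMod p =>
      v.1 = 0 ∧ ¬ v.2.1 = 0).val.map w = Multiset.replicate (p * (p ^ 2 - 1)) (p ^ 2 - p) := by
    apply map_rep
    · have : (Finset.univ.filter fun v : ZMod p × Fq × ZMod p => v.1 = 0 ∧ ¬ v.2.1 = 0)
          = ({0} : Finset (ZMod p)) ×ˢ (Finset.univ.erase (0 : Fq)) ×ˢ
            (Finset.univ : Finset (ZMod p)) := by
        ext ⟨a, b, c⟩
        simp only [Finset.mem_filter, Finset.mem_univ, true_and, Finset.mem_product,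
          Finset.mem_singleton, Finset.mem_erase, and_true, ne_eq]
      rw [this, Finset.card_product, Finset.card_product, Finset.card_erase_of_mem (by simp),
        Finset.card_univ, Finset.card_univ, ZMod.card, hcq]
      simp [mul_comm]
    · rintro ⟨a, b, c⟩ h
      simp only [Finset.mem_filter] at h
      obtain ⟨_, rfl, hb⟩ := h
      simp only [w, Z_lin hcq b hb]
  have hcs : ((Finset.univ : Finset (ZMod p)).erase 0).card = p - 1 := by
    rw [Finset.card_erase_of_mem (by simp), Finset.card_univ, ZMod.card]
  have r4 : (Finset.univ.filter fun v : ZMod p × Fq × ZMod p =>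
      ¬ v.1 = 0 ∧ (Z (Phi f v)).card = 1).val.map w
        = Multiset.replicate (p ^ 2 * (p - 1)) (p ^ 2 - 1) := by
    apply map_rep
    · have := card_tangent hodd hcq hK (Finset.univ.erase 0) (by simp)
      rw [hcs] at this
      rw [mul_comm, ← this]
      congr 1
      ext v; simp
    · intro v h
      simp only [Finset.mem_filter] at h
      simp only [w, h.2.2]
  have r5 : (Finset.univ.filter fun v : ZMod p × Fq × ZMod p =>
      ¬ v.1 = 0 ∧ ¬ (Z (Phi f v)).card = 1).val.map w
        = Multiset.replicate (p ^ 2 * (p - 1) ^ 2) (p ^ 2 - p - 1) := by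
    have hz : ∀ v : ZMod p × Fq × ZMod p, v.1 ≠ 0 →
        (¬ (Z (Phi f v)).card = 1 ↔ (Z (Phi f v)).card = p + 1) := by
      rintro ⟨a, b, c⟩ ha
      rw [Z_quad hK a ha]
      split_ifs <;> omega
    apply map_rep
    · have := card_secant hodd hcq hK (Finset.univ.erase 0) (by simp)
      rw [hcs] at this
      have e : p ^ 2 * (p - 1) ^ 2 = (p - 1) * (p ^ 2 * (p - 1)) := by ring
      rw [e, ← this]
      congr 1
      apply Finset.filter_congr
      intro v _
      simp only [Finset.mem_erase, Finset.mem_univ, and_true]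
      exact and_congr_right (fun h => hz v h)
    · intro v h
      simp only [Finset.mem_filter] at h
      have := (hz v h.2.1).1 h.2.2
      simp only [w, this]; omega
  rw [r1, r2, r3, r4, r5]
  abel

end

end RFaux

theorem stmt16 (p : ℕ) [Fact p.Prime] (hodd : Odd p)
    (Fq : Type) [Field Fq] [Fintype Fq] [Algebra (ZMod p) Fq]
    (hcq : Fintype.card Fq = p ^ 2)
    (f : Fq → ZMod p) (ε : ℤ) (fstar : Fq → ZMod p) (hRF : IsRF p 2 Fq f ε fstar)
    (hsign : ε * qchar (ZMod p) (-1) = -1)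
    (C : Set (Fq → ZMod p)) (hC : C = rfCode p Fq f) :
    -- `C` is a `[p², 4, p² - p - 1]` code
    Fintype.card Fq = p ^ 2 ∧
    Nat.card C = p ^ 4 ∧
    IsMinDist C (p ^ 2 - p - 1) ∧
    -- weight enumerator
    (C.toFinset.val.map fun c => hammingNorm c)
      = Multiset.replicate 1 0
        + Multiset.replicate (p ^ 2 * (p - 1) ^ 2) (p ^ 2 - p - 1)
        + Multiset.replicate (p * (p ^ 2 - 1)) (p ^ 2 - p)
        + Multiset.replicate (p ^ 2 * (p - 1)) (p ^ 2 - 1)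
        + Multiset.replicate (p - 1) (p ^ 2) ∧
    -- the dual code is a `[p², p² - 4, 4]` code
    Nat.card (dualCode C) = p ^ (p ^ 2 - 4) ∧
    IsMinDist (dualCode C) 4 ∧
    -- 2-designs
    Holds2Design C (p ^ 2 - p - 1) ((p - 2) * (p ^ 2 - p - 1)) ∧
    Holds2DesignCompl C (p ^ 2 - p - 1) p ∧
    Holds2Design (dualCode C) 4 ((p ^ 2 - 3) * (p - 2) / 2) := by
  have hp3 := RFaux.two_lt hodd
  have hK : RFaux.Key f fstar := by
    intro β t
    apply RFaux.fiber_count p hcq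
    rw [hRF.walsh β, RFaux.sign_eq p hodd ε hsign]
  subst hC
  have hcompl := RFaux.compl_design hodd hcq hK
  have hdual := RFaux.dual_design hodd hcq hK
  refine ⟨hcq, RFaux.card_rf hodd hcq hK, ⟨?_, ?_⟩, RFaux.weights hodd hcq hK,
    RFaux.card_dual hodd hcq hK, ⟨?_, ?_⟩, RFaux.support_design hodd hcq hK, hcompl, hdual⟩
  · have h := hcompl 0 1 zero_ne_one
    have hpos := lt_of_lt_of_eq (show 0 < p by omega) h.symm
    obtain ⟨⟨S, ⟨c, hc, hn, _⟩, _⟩⟩ := (Nat.card_pos_iff.1 hpos).1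
    refine ⟨c, hc, ?_, hn⟩
    rintro rfl
    have hz : ∀ inst : DecidableEq (ZMod p), hammingNorm (0 : Fq → ZMod p) = 0 :=
      fun _ => hammingNorm_zero
    rw [hz] at hn
    have : 3 * p ≤ p ^ 2 := by nlinarith
    omega
  · intro c hc hc0
    rw [RFaux.rf_eq] at hc
    obtain ⟨v, rfl⟩ := hc
    have hv : v ≠ 0 := by rintro rfl; simp at hc0
    have h1 := RFaux.Z_lt hodd hcq hK v hv
    have h2 := RFaux.norm_add (inst := fun a b => Classical.propDecidable (a = b)) hcq (RFaux.Phi f v)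
    omega
  · have h := hdual 0 1 zero_ne_one
    have hpos : 0 < (p ^ 2 - 3) * (p - 2) / 2 := by
      have h9 : 9 ≤ p ^ 2 := by nlinarith
      have h6 : 6 ≤ p ^ 2 - 3 := by omega
      have h1 : 1 ≤ p - 2 := by omega
      have := Nat.mul_le_mul h6 h1
      omega
    rw [← h] at hpos
    obtain ⟨⟨S, ⟨c, hc, hn, _⟩, _⟩⟩ := (Nat.card_pos_iff.1 hpos).1
    refine ⟨c, hc, ?_, hn⟩
    rintro rfl
    have hz : ∀ inst : DecidableEq (ZMod p), hammingNorm (0 : Fq → ZMod p) = 0 :=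
      fun _ => hammingNorm_zero
    rw [hz] at hn
    omega
  · intro c hc hc0
    exact RFaux.dual_ge (inst := fun a b => Classical.propDecidable (a = b)) hodd hcq hK c hc hc0
end
end
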